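/- arXiv:1206.0163 — 4 statements merged into one kernel-verified Lean document; each statement's English description precedes it below -/
import Mathlib

section
/- For all real constants a > b > 0 and all parameters λ₁, λ₂ ∈ ℝ \ {a, b} with λ₁ ≠ λ₂, the functions K_{λ₁} and K_{λ₂} are functionally independent: the set of points (x, y, ẋ, ẏ) ∈ ℝ⁴ at which the gradients ∇K_{λ₁} and ∇K_{λ₂} are linearly independent is an open dense subset of ℝ⁴. -/
/-- The function `K_λ` associated with the confocal family with parameters `a > b > 0`. -/
noncomputable def Kfun (a b lam : ℝ) (x y vx vy : ℝ) : ℝ :=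
  vx ^ 2 / (a - lam) + vy ^ 2 / (b - lam) - (vx * y - vy * x) ^ 2 / ((a - lam) * (b - lam))

/-- The gradient of a function of `(x, y, ẋ, ẏ)`: the vector of its four partial
derivatives. -/
noncomputable def gradient4 (f : ℝ → ℝ → ℝ → ℝ → ℝ) (x y vx vy : ℝ) : Fin 4 → ℝ :=
  ![deriv (fun t => f t y vx vy) x,
    deriv (fun t => f x t vx vy) y,
    deriv (fun t => f x y t vy) vx,
    deriv (fun t => f x y vx t) vy]

theorem gradient4_Kfun (a b l x y vx vy : ℝ) :
    gradient4 (Kfun a b l) x y vx vy =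
      ![2 * (vx * y - vy * x) * vy / ((a - l) * (b - l)),
        - (2 * (vx * y - vy * x) * vx / ((a - l) * (b - l))),
        2 * vx / (a - l) - 2 * (vx * y - vy * x) * y / ((a - l) * (b - l)),
        2 * vy / (b - l) + 2 * (vx * y - vy * x) * x / ((a - l) * (b - l))] := by
  have hx := ((((((hasDerivAt_id x).const_mul vy).const_sub (vx * y)).pow 2).div_const
    ((a - l) * (b - l))).const_sub (vx ^ 2 / (a - l) + vy ^ 2 / (b - l)))
  have hy := ((((((hasDerivAt_id y).const_mul vx).sub_const (vy * x)).pow 2).div_const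
    ((a - l) * (b - l))).const_sub (vx ^ 2 / (a - l) + vy ^ 2 / (b - l)))
  have hvx := (((((hasDerivAt_id vx).pow 2).div_const (a - l)).add_const (vy ^ 2 / (b - l))).sub
    (((((hasDerivAt_id vx).mul_const y).sub_const (vy * x)).pow 2).div_const
    ((a - l) * (b - l))))
  have hvy := (((((hasDerivAt_id vy).pow 2).div_const (b - l)).const_add (vx ^ 2 / (a - l))).sub
    (((((hasDerivAt_id vy).mul_const x).const_sub (vx * y)).pow 2).div_const
    ((a - l) * (b - l))))
  have ex : deriv (fun t => Kfun a b l t y vx vy) x = _ := hx.deriv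
  have ey : deriv (fun t => Kfun a b l x t vx vy) y = _ := hy.deriv
  have evx : deriv (fun t => Kfun a b l x y t vy) vx = _ := hvx.deriv
  have evy : deriv (fun t => Kfun a b l x y vx t) vy = _ := hvy.deriv
  unfold gradient4
  rw [ex, ey, evx, evy]
  congr 1
  · simp; ring
  congr 1
  · simp
  congr 1
  · simp
  congr 1
  · simp; ring

theorem continuous_gradient4_Kfun (a b l : ℝ) :
    Continuous (fun p : ℝ × ℝ × ℝ × ℝ =>
      gradient4 (Kfun a b l) p.1 p.2.1 p.2.2.1 p.2.2.2) := by
  simp only [gradient4_Kfun, div_eq_mul_inv]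
  refine continuous_pi fun i => ?_
  fin_cases i <;> simp <;> fun_prop

theorem linInd_of_ne (a b : ℝ) (ha : a > b)
    (l m : ℝ) (h1a : l ≠ a) (h1b : l ≠ b) (h2a : m ≠ a) (h2b : m ≠ b)
    (hne : l ≠ m) (x y vx vy : ℝ) (hvx : vx ≠ 0) (hvy : vy ≠ 0) :
    LinearIndependent ℝ ![gradient4 (Kfun a b l) x y vx vy, gradient4 (Kfun a b m) x y vx vy] := by
  rw [LinearIndependent.pair_iff]
  intro s t h
  have hA := sub_ne_zero.2 h1a.symm
  have hB := sub_ne_zero.2 h1b.symm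
  have hC := sub_ne_zero.2 h2a.symm
  have hD := sub_ne_zero.2 h2b.symm
  have hlm := sub_ne_zero.2 hne
  have hab := sub_ne_zero.2 ha.ne'
  rw [gradient4_Kfun, gradient4_Kfun] at h
  have h0 := congrFun h 0
  have h2 := congrFun h 2
  have h3 := congrFun h 3
  simp at h0 h2 h3
  obtain ⟨S, rfl⟩ : ∃ S, s = S * ((a - l) * (b - l)) := ⟨s / ((a - l) * (b - l)), by field_simp⟩
  obtain ⟨T, rfl⟩ : ∃ T, t = T * ((a - m) * (b - m)) := ⟨t / ((a - m) * (b - m)), by field_simp⟩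
  generalize hL : vx * y - vy * x = L at *
  have e0 : (S + T) * L * vy = 0 := by
    field_simp at h0
    linear_combination h0 / 2
  have e2 : (S * (b - l) + T * (b - m)) * vx - (S + T) * L * y = 0 := by
    have : 2 * ((S * (b - l) + T * (b - m)) * vx - (S + T) * L * y) = 0 := by
      rw [← h2]; field_simp; ring
    linarith
  have e3 : (S * (a - l) + T * (a - m)) * vy + (S + T) * L * x = 0 := by
    have : 2 * ((S * (a - l) + T * (a - m)) * vy + (S + T) * L * x) = 0 := by
      rw [← h3]; field_simp; ring
    linarith
  have f0 : (S + T) * L = 0 := (mul_eq_zero.1 e0).resolve_right hvy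
  rw [f0] at e2 e3
  have f2 : S * (b - l) + T * (b - m) = 0 := by
    have : (S * (b - l) + T * (b - m)) * vx = 0 := by linarith
    exact (mul_eq_zero.1 this).resolve_right hvx
  have f3 : S * (a - l) + T * (a - m) = 0 := by
    have : (S * (a - l) + T * (a - m)) * vy = 0 := by linarith
    exact (mul_eq_zero.1 this).resolve_right hvy
  have g : S + T = 0 := by
    have : (S + T) * (a - b) = 0 := by linear_combination f3 - f2
    exact (mul_eq_zero.1 this).resolve_right hab
  have gS : S = 0 := by
    have : S * (l - m) = 0 := by linear_combination (b - m) * g - f2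
    exact (mul_eq_zero.1 this).resolve_right hlm
  have gT : T = 0 := by linarith
  simp [gS, gT]

theorem functionally_independent_K
    (a b : ℝ) (ha : a > b) (hb : b > 0)
    (lam1 lam2 : ℝ) (h1a : lam1 ≠ a) (h1b : lam1 ≠ b) (h2a : lam2 ≠ a) (h2b : lam2 ≠ b)
    (hne : lam1 ≠ lam2) :
    IsOpen {p : ℝ × ℝ × ℝ × ℝ |
        LinearIndependent ℝ
          ![gradient4 (Kfun a b lam1) p.1 p.2.1 p.2.2.1 p.2.2.2,
            gradient4 (Kfun a b lam2) p.1 p.2.1 p.2.2.1 p.2.2.2]} ∧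
    Dense {p : ℝ × ℝ × ℝ × ℝ |
        LinearIndependent ℝ
          ![gradient4 (Kfun a b lam1) p.1 p.2.1 p.2.2.1 p.2.2.2,
            gradient4 (Kfun a b lam2) p.1 p.2.1 p.2.2.1 p.2.2.2]} := by
  constructor
  · refine (isOpen_setOfPred_linearIndependent (𝕜 := ℝ) (ι := Fin 2) (E := Fin 4 → ℝ)).preimage
      (f := fun p : ℝ × ℝ × ℝ × ℝ =>
        ![gradient4 (Kfun a b lam1) p.1 p.2.1 p.2.2.1 p.2.2.2,
          gradient4 (Kfun a b lam2) p.1 p.2.1 p.2.2.1 p.2.2.2]) ?_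
    refine continuous_pi fun i => ?_
    fin_cases i
    · exact continuous_gradient4_Kfun a b lam1
    · exact continuous_gradient4_Kfun a b lam2
  · have hd : Dense ({0}ᶜ : Set ℝ) := dense_compl_singleton 0
    have hU : Dense (Set.univ : Set ℝ) := dense_univ
    refine (hU.prod (hU.prod (hd.prod hd))).mono ?_
    rintro ⟨x, y, vx, vy⟩ ⟨-, -, h1, h2⟩
    exact linInd_of_ne a b ha lam1 lam2 h1a h1b h2a h2b hne x y vx vy h1 h2
end

section
/- Let a > b > 0 and 0 < α₀ < b be real constants and let E = C_{α₀} be the ellipse x²/(a−α₀) + y²/(b−α₀) = 1. Then there exist a homeomorphism h from E onto the circle ℝ/ℤ and a function ρ : (−∞, α₀) → ℝ with the following property: for every λ < α₀ and every triple of points X ∈ E, Y ∈ E, A ∈ C_λ such that the line through X and A is tangent to E at X, the line through A and Y is tangent to E at Y, and the direction Y − A is the billiard reflection of the direction A − X off C_λ at A (i.e. Y − A is a positive scalar multiple of the reflection of A − X across the tangent line of C_λ at A), one has h(Y) − h(X) = ρ(λ) or h(Y) − h(X) = −ρ(λ) in ℝ/ℤ. -/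
/-- The conic `C_λ : x²/(a−λ) + y²/(b−λ) = 1` of the confocal family. -/
def confocalConic (a b lam : ℝ) : Set (ℝ × ℝ) :=
  {p : ℝ × ℝ | p.1 ^ 2 / (a - lam) + p.2 ^ 2 / (b - lam) = 1}

/-- The billiard reflection of a vector `v` off the conic `C_λ` at the point `A ∈ C_λ`:
the component along the normal `n = (A₁/(a−λ), A₂/(b−λ))` is reversed. -/
noncomputable def billiardReflect (a b lam : ℝ) (A v : ℝ × ℝ) : ℝ × ℝ :=
  let n : ℝ × ℝ := (A.1 / (a - lam), A.2 / (b - lam))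
  v - (2 * ((v.1 * n.1 + v.2 * n.2) / (n.1 * n.1 + n.2 * n.2))) • n

/-- The line through the points `P` and `Q` is tangent to the set `E` at the point `X`:
`X` lies on the line and the line meets `E` only at `X`. -/
def TangentAt (E : Set (ℝ × ℝ)) (P Q X : ℝ × ℝ) : Prop :=
  X ∈ E ∧ (∃ t : ℝ, X = P + t • (Q - P)) ∧
    ∀ Z ∈ E, (∃ t : ℝ, Z = P + t • (Q - P)) → Z = X


/-- The squared speed. -/
noncomputable def crfW2 (P Q θ : ℝ) : ℝ := P * Real.sin θ ^ 2 + Q * Real.cos θ ^ 2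

lemma crfW2_pos {P Q : ℝ} (hP : 0 < P) (hQ : 0 < Q) (θ : ℝ) : 0 < crfW2 P Q θ := by
  unfold crfW2
  have h1 := Real.sin_sq_add_cos_sq θ
  rcases (sq_nonneg (Real.sin θ)).eq_or_lt with h | h
  · rw [← h] at h1 ⊢
    have : Real.cos θ ^ 2 = 1 := by linarith
    rw [this]; linarith
  · have := mul_pos hP h
    have := mul_nonneg hQ.le (sq_nonneg (Real.cos θ))
    linarith

lemma crf_exists_T {P Q : ℝ} (hP : 0 < P) (hQ : 0 < Q) :
    ∃ (T : ℝ → ℝ) (L : ℝ), 0 < L ∧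
      (∀ θ, HasDerivAt T (1 / (L * √(crfW2 P Q θ))) θ) ∧ ∀ θ, T (θ + 2 * Real.pi) = T θ + 1 := by
  set f : ℝ → ℝ := fun θ => 1 / √(crfW2 P Q θ) with hf
  have hpos : ∀ θ, 0 < √(crfW2 P Q θ) := fun θ => Real.sqrt_pos.2 (crfW2_pos hP hQ θ)
  have hfc : Continuous f := by
    refine Continuous.div continuous_const ?_ (fun θ => (hpos θ).ne')
    unfold crfW2
    fun_prop
  have hper : Function.Periodic f (2 * Real.pi) := by
    intro θ
    simp [hf, crfW2]
  set L := ∫ x in (0:ℝ)..(2 * Real.pi), f x with hL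
  have hLpos : 0 < L := by
    apply intervalIntegral.intervalIntegral_pos_of_pos
    · exact hfc.intervalIntegrable _ _
    · intro x; exact one_div_pos.2 (hpos x)
    · positivity
  refine ⟨fun θ => (∫ x in (0:ℝ)..θ, f x) / L, L, hLpos, ?_, ?_⟩
  · intro θ
    have := (hfc.integral_hasStrictDerivAt 0 θ).hasDerivAt.div_const L
    refine this.congr_deriv ?_
    simp only [hf]
    have := hpos θ
    field_simp
  · intro θ
    have h1 : (∫ x in (0:ℝ)..(θ + 2 * Real.pi), f x) = (∫ x in (0:ℝ)..θ, f x) + L := by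
      rw [← intervalIntegral.integral_add_adjacent_intervals (hfc.intervalIntegrable 0 θ)
        (hfc.intervalIntegrable θ _), hper.intervalIntegral_add_eq θ 0, zero_add]
    simp only [h1]
    field_simp

lemma crf_T_int {T : ℝ → ℝ} (hT : ∀ θ, T (θ + 2 * Real.pi) = T θ + 1) (θ : ℝ) (k : ℤ) :
    T (θ + k * (2 * Real.pi)) = T θ + k := by
  induction k using Int.induction_on with
  | zero => simp
  | succ n ih =>
    have := hT (θ + (n:ℤ) * (2 * Real.pi))
    rw [ih] at this
    push_cast at this ⊢
    rw [← add_assoc, ← this]; congr 1; ring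
  | pred n ih =>
    have := hT (θ + ((-(n:ℤ) - 1 : ℤ) : ℝ) * (2 * Real.pi))
    have e : θ + ((-(n:ℤ) - 1 : ℤ) : ℝ) * (2 * Real.pi) + 2 * Real.pi
      = θ + ((-(n:ℤ) : ℤ) : ℝ) * (2 * Real.pi) := by push_cast; ring
    rw [e, ih] at this
    push_cast at this ⊢
    linarith

lemma crf_circle {x y : ℝ} (h : x ^ 2 + y ^ 2 = 1) : ∃ θ : ℝ, x = Real.cos θ ∧ y = Real.sin θ := by
  have hn : ‖(⟨x, y⟩ : ℂ)‖ = 1 := by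
    rw [Complex.norm_eq_sqrt_sq_add_sq]; simp [h]
  refine ⟨Complex.arg ⟨x, y⟩, ?_, ?_⟩
  · have := Complex.norm_mul_cos_arg ⟨x, y⟩
    rw [hn] at this; simpa using this.symm
  · have := Complex.norm_mul_sin_arg ⟨x, y⟩
    rw [hn] at this; simpa using this.symm

lemma crf_coe_int (k : ℤ) : ((k : ℝ) : AddCircle (1 : ℝ)) = 0 :=
  (AddCircle.coe_eq_zero_iff 1).2 ⟨k, by simp⟩

lemma crf_coe_add_int (y : ℝ) (k : ℤ) : ((y + k : ℝ) : AddCircle (1 : ℝ)) = (y : AddCircle (1:ℝ)) := by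
  rw [AddCircle.coe_add, crf_coe_int, add_zero]

/-- The homeomorphism built from `T`. -/
lemma crf_homeo {a b α : ℝ} (hP : 0 < a - α) (hQ : 0 < b - α) {T : ℝ → ℝ}
    (hmono : StrictMono T) (hcont : Continuous T)
    (hT : ∀ θ, T (θ + 2 * Real.pi) = T θ + 1) :
    ∃ h : ↥(confocalConic a b α) ≃ₜ AddCircle (1 : ℝ),
      ∀ (X : ↥(confocalConic a b α)) (θ : ℝ),
        (X : ℝ × ℝ) = (√(a - α) * Real.cos θ, √(b - α) * Real.sin θ) →
        h X = ((T θ : ℝ) : AddCircle (1 : ℝ)) := by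
  have hsurj : Function.Surjective T := by
    intro y
    have h1 : T (0 + (⌊y - T 0⌋ : ℤ) * (2 * Real.pi)) ≤ y := by
      rw [crf_T_int hT]; have := Int.floor_le (y - T 0); linarith
    have h2 : y ≤ T (0 + ((⌊y - T 0⌋ + 1 : ℤ) : ℝ) * (2 * Real.pi)) := by
      rw [crf_T_int hT]; have := Int.lt_floor_add_one (y - T 0); push_cast; linarith
    exact mem_range_of_exists_le_of_exists_ge hcont ⟨_, h1⟩ ⟨_, h2⟩
  set e : ℝ ≃o ℝ := hmono.orderIsoOfSurjective T hsurj with he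
  have heT : ∀ θ, e θ = T θ := fun θ => rfl
  have hes : ∀ θ, e.symm (T θ) = θ := fun θ => e.symm_apply_apply θ
  have hTe : ∀ t, T (e.symm t) = t := fun t => e.apply_symm_apply t
  have hp : 0 < √(a - α) := Real.sqrt_pos.2 hP
  have hq : 0 < √(b - α) := Real.sqrt_pos.2 hQ
  have hmem : ∀ θ, ((√(a - α) * Real.cos θ, √(b - α) * Real.sin θ) : ℝ × ℝ)
      ∈ confocalConic a b α := by
    intro θ
    simp only [confocalConic, Set.mem_ofPred_eq, mul_pow, Real.sq_sqrt hP.le, Real.sq_sqrt hQ.le]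
    rw [mul_div_cancel_left₀ _ hP.ne', mul_div_cancel_left₀ _ hQ.ne']
    exact Real.cos_sq_add_sin_sq θ
  let g0 : ℝ → ↥(confocalConic a b α) := fun t => ⟨_, hmem (e.symm t)⟩
  have hg0c : Continuous g0 := by
    have : Continuous e.symm := e.symm.continuous
    apply Continuous.subtype_mk
    fun_prop
  have hg0p : Function.Periodic g0 1 := by
    intro t
    have : e.symm (t + 1) = e.symm t + 2 * Real.pi := by
      rw [← hes (e.symm t + 2 * Real.pi), hT, hTe]
    simp [g0, this]
  let g : AddCircle (1:ℝ) → ↥(confocalConic a b α) := hg0p.lift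
  have hgt : ∀ t : ℝ, g (t : AddCircle (1:ℝ)) = g0 t := fun t => rfl
  have hgc : Continuous g := continuous_coinduced_dom.2 hg0c
  have hgb : Function.Bijective g := by
    constructor
    · intro x y
      induction x using QuotientAddGroup.induction_on with | _ x => ?_
      induction y using QuotientAddGroup.induction_on with | _ y => ?_
      intro hxy
      have hxy' : g0 x = g0 y := hxy
      simp only [g0, Subtype.mk.injEq, Prod.mk.injEq] at hxy'
      obtain ⟨h1, h2⟩ := hxy'
      have h1 := mul_left_cancel₀ hp.ne' h1
      have h2 := mul_left_cancel₀ hq.ne' h2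
      have h3 := Real.Angle.cos_sin_inj h1 h2
      rw [Real.Angle.angle_eq_iff_two_pi_dvd_sub] at h3
      obtain ⟨k, hk⟩ := h3
      have h4 : e.symm x = e.symm y + k * (2 * Real.pi) := by linarith
      have h5 : x = y + k := by
        rw [← hTe x, h4, crf_T_int hT, hTe]
      rw [h5]
      exact crf_coe_add_int y k
    · rintro ⟨⟨x, y⟩, hX⟩
      have hX' : x ^ 2 / (a - α) + y ^ 2 / (b - α) = 1 := hX
      have h1 : (x / √(a - α)) ^ 2 + (y / √(b - α)) ^ 2 = 1 := by
        rw [div_pow, div_pow, Real.sq_sqrt hP.le, Real.sq_sqrt hQ.le]; exact hX'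
      obtain ⟨θ, h2, h3⟩ := crf_circle h1
      refine ⟨(T θ : ℝ), ?_⟩
      rw [hgt]
      simp only [g0, hes, ← h2, ← h3]
      congr 2 <;> field_simp
  let h := Continuous.homeoOfEquivCompactToT2 (f := Equiv.ofBijective g hgb) hgc
  refine ⟨h.symm, fun X θ hX => ?_⟩
  rw [Homeomorph.symm_apply_eq]
  apply Subtype.ext
  rw [hX]
  change _ = (g0 (T θ) : ℝ × ℝ)
  simp [g0, hes]

/-- Half of the angular distance between the tangency points. -/
noncomputable def crfDelta (K D s : ℝ) : ℝ := Real.arccos (K + D * Real.cos (2 * s)) / 2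

set_option maxHeartbeats 2000000 in
lemma crf_const {P Q μ L : ℝ} (hQ : 0 < Q) (hPQ : Q < P) (hμ : 0 < μ) {T : ℝ → ℝ} (hL : 0 < L)
    (hTd : ∀ θ, HasDerivAt T (1 / (L * √(crfW2 P Q θ))) θ) {K D : ℝ}
    (hK : K = P / (P + μ) + Q / (Q + μ) - 1) (hD : D = P / (P + μ) - Q / (Q + μ)) (s : ℝ) :
    T (s + crfDelta K D s) - T (s - crfDelta K D s) =
      T (0 + crfDelta K D 0) - T (0 - crfDelta K D 0) := by
  have hP : 0 < P := hQ.trans hPQ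
  have hA1 : P / (P + μ) < 1 := by rw [div_lt_one (by linarith)]; linarith
  have hB0 : 0 < Q / (Q + μ) := by positivity
  have hBA : Q / (Q + μ) < P / (P + μ) := by
    rw [div_lt_div_iff₀ (by linarith) (by linarith)]; nlinarith
  have hD0 : 0 < D := by linarith
  have hKD1 : K + D < 1 := by linarith
  have hKD2 : -1 < K - D := by linarith
  have key : D * (P + Q) = (P - Q) / 2 * (1 - K ^ 2 + D ^ 2) := by
    rw [hK, hD]
    have : P + μ ≠ 0 := by positivity
    have : Q + μ ≠ 0 := by positivity
    field_simp
    ring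
  have hder : ∀ s, HasDerivAt (fun s => T (s + crfDelta K D s) - T (s - crfDelta K D s)) 0 s := by
    intro s
    set c := Real.cos (2 * s) with hc
    set S := Real.sin (2 * s) with hS
    have hcS : S ^ 2 + c ^ 2 = 1 := Real.sin_sq_add_cos_sq _
    have hc1 : c ≤ 1 := Real.cos_le_one _
    have hc2 : -1 ≤ c := Real.neg_one_le_cos _
    set x := K + D * c with hx
    have hx1 : x < 1 := by nlinarith
    have hx2 : -1 < x := by nlinarith
    set R := √(1 - x ^ 2) with hR
    have hRx : 0 < 1 - x ^ 2 := by nlinarith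
    have hRpos : 0 < R := Real.sqrt_pos.2 hRx
    have hR2 : R ^ 2 = 1 - x ^ 2 := Real.sq_sqrt hRx.le
    set δ := crfDelta K D s with hδ
    have h2δ : 2 * δ = Real.arccos x := by rw [hδ, crfDelta]; ring
    have hcδ : Real.cos (2 * δ) = x := by rw [h2δ, Real.cos_arccos hx2.le hx1.le]
    have hsδ : Real.sin (2 * δ) = R := by rw [h2δ, Real.sin_arccos]
    have hd : HasDerivAt (crfDelta K D) (D * S / R) s := by
      have h1 : HasDerivAt (fun s : ℝ => K + D * Real.cos (2 * s)) (D * (-S * 2)) s := by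
        have := ((Real.hasDerivAt_cos (2 * s)).comp s
          ((hasDerivAt_id s).const_mul 2)).const_mul D |>.const_add K
        simpa [Function.comp_def] using this
      have h2 := ((Real.hasDerivAt_arccos hx2.ne' hx1.ne).comp s h1).div_const 2
      refine HasDerivAt.congr_deriv (f := crfDelta K D) h2 ?_
      rw [← hR]; field_simp
    have hT1 := (hTd (s + δ)).comp s ((hasDerivAt_id s).add hd)
    have hT2 := (hTd (s - δ)).comp s ((hasDerivAt_id s).sub hd)
    have hfin := hT1.sub hT2
    refine HasDerivAt.congr_deriv (f := fun s => T (s + crfDelta K D s) - T (s - crfDelta K D s))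
      hfin ?_
    set w1 := √(crfW2 P Q (s + δ)) with hw1
    set w2 := √(crfW2 P Q (s - δ)) with hw2
    have hw1p : 0 < w1 := Real.sqrt_pos.2 (crfW2_pos hP hQ _)
    have hw2p : 0 < w2 := Real.sqrt_pos.2 (crfW2_pos hP hQ _)
    have hW : ∀ θ, crfW2 P Q θ = (P + Q) / 2 - (P - Q) / 2 * Real.cos (2 * θ) := by
      intro θ
      rw [crfW2, Real.cos_two_mul]
      linear_combination P * Real.sin_sq_add_cos_sq θ
    have hw1s : w1 ^ 2 = (P + Q) / 2 - (P - Q) / 2 * (c * x - S * R) := by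
      rw [hw1, Real.sq_sqrt (crfW2_pos hP hQ _).le, hW, mul_add, Real.cos_add, hcδ, hsδ]
    have hw2s : w2 ^ 2 = (P + Q) / 2 - (P - Q) / 2 * (c * x + S * R) := by
      rw [hw2, Real.sq_sqrt (crfW2_pos hP hQ _).le, hW, mul_sub, Real.cos_sub, hcδ, hsδ]
    have hRS : (D * S) ^ 2 ≤ R ^ 2 := by
      rw [hR2, hx]
      have f1 : 0 < 1 - (K + D) ^ 2 := by nlinarith
      have f2 : 0 < 1 - (K - D) ^ 2 := by nlinarith
      have f3 := mul_nonneg f1.le (by linarith : 0 ≤ (1 + c) / 2)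
      have f4 := mul_nonneg f2.le (by linarith : 0 ≤ (1 - c) / 2)
      have f5 : S ^ 2 = 1 - c ^ 2 := by linarith
      rw [mul_pow, f5]
      nlinarith
    have habs := abs_le_of_sq_le_sq' hRS hRpos.le
    have hmain : (R + D * S) * w2 = (R - D * S) * w1 := by
      have h1 : 0 ≤ (R + D * S) * w2 := mul_nonneg (by linarith) hw2p.le
      have h2 : 0 ≤ (R - D * S) * w1 := mul_nonneg (by linarith) hw1p.le
      rw [← sq_eq_sq₀ h1 h2, mul_pow, mul_pow, hw1s, hw2s]
      have hkey2 : 2 * D * ((P + Q) / 2 - (P - Q) / 2 * (c * x))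
          = (P - Q) / 2 * (R ^ 2 + (D * S) ^ 2) := by
        rw [hR2, hx]
        linear_combination key - (P - Q) / 2 * D ^ 2 * hcS
      linear_combination 2 * R * S * hkey2
    field_simp
    linear_combination hmain
  have := is_const_of_deriv_eq_zero (fun s => (hder s).differentiableAt)
    (fun s => (hder s).deriv) s 0
  exact this

lemma crf_relation {P Q μ L : ℝ} (hQ : 0 < Q) (hPQ : Q < P) (hμ : 0 < μ) {T : ℝ → ℝ} (hL : 0 < L)
    (hTd : ∀ θ, HasDerivAt T (1 / (L * √(crfW2 P Q θ))) θ)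
    (hT : ∀ θ, T (θ + 2 * Real.pi) = T θ + 1) {K D : ℝ}
    (hK : K = P / (P + μ) + Q / (Q + μ) - 1) (hD : D = P / (P + μ) - Q / (Q + μ))
    {θ₁ θ₂ : ℝ} (h : Real.cos (θ₂ - θ₁) = K + D * Real.cos (θ₂ + θ₁)) :
    ∃ k : ℤ, T θ₂ - T θ₁ = (T (0 + crfDelta K D 0) - T (0 - crfDelta K D 0)) + k ∨
      T θ₂ - T θ₁ = -(T (0 + crfDelta K D 0) - T (0 - crfDelta K D 0)) + k := by
  set s := (θ₂ + θ₁) / 2 with hs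
  have h2s : θ₂ + θ₁ = 2 * s := by rw [hs]; ring
  have hc : Real.cos (2 * crfDelta K D s) = Real.cos (θ₂ - θ₁) := by
    have : 2 * crfDelta K D s = Real.arccos (Real.cos (θ₂ - θ₁)) := by
      rw [h, h2s, crfDelta]; ring
    rw [this, Real.cos_arccos (Real.neg_one_le_cos _) (Real.cos_le_one _)]
  rw [Real.cos_eq_cos_iff] at hc
  obtain ⟨k, hk⟩ := hc
  have hper : crfDelta K D (s - k * Real.pi) = crfDelta K D s := by
    have : 2 * (s - k * Real.pi) = 2 * s - k * (2 * Real.pi) := by ring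
    rw [crfDelta, this, Real.cos_sub_int_mul_two_pi, crfDelta]
  have hconst := crf_const hQ hPQ hμ hL hTd hK hD (s - k * Real.pi)
  rw [hper] at hconst
  rcases hk with hk | hk
  · refine ⟨k, Or.inl ?_⟩
    rw [← hconst]
    have e1 : θ₂ = s - k * Real.pi + crfDelta K D s + k * (2 * Real.pi) := by
      linarith
    have e2 : θ₁ = s - k * Real.pi - crfDelta K D s := by
      linarith
    have := crf_T_int hT (s - k * Real.pi + crfDelta K D s) k
    rw [← e1] at this
    rw [← e2, this]; ring
  · refine ⟨k, Or.inr ?_⟩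
    rw [← hconst]
    have e1 : θ₂ = s - k * Real.pi - crfDelta K D s + k * (2 * Real.pi) := by
      linarith
    have e2 : θ₁ = s - k * Real.pi + crfDelta K D s := by
      linarith
    have := crf_T_int hT (s - k * Real.pi - crfDelta K D s) k
    rw [← e1] at this
    rw [← e2, this]; ring

lemma crf_outside {a b α lam : ℝ} (hP : 0 < a - α) (hQ : 0 < b - α) (hlam : lam < α)
    {A : ℝ × ℝ} (hA : A ∈ confocalConic a b lam) : A ∉ confocalConic a b α := by
  intro h
  simp only [confocalConic, Set.mem_ofPred_eq] at hA h
  have h1 : A.1 ^ 2 / (a - lam) ≤ A.1 ^ 2 / (a - α) := by gcongr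
  have h2 : A.2 ^ 2 / (b - lam) ≤ A.2 ^ 2 / (b - α) := by gcongr
  have e1 : A.1 ^ 2 / (a - lam) = A.1 ^ 2 / (a - α) := by linarith
  have e2 : A.2 ^ 2 / (b - lam) = A.2 ^ 2 / (b - α) := by linarith
  have hP' : 0 < a - lam := by linarith
  have hQ' : 0 < b - lam := by linarith
  have z1 : A.1 ^ 2 = 0 := by
    rw [div_eq_div_iff hP'.ne' hP.ne'] at e1
    have : A.1 ^ 2 * (α - lam) = 0 := by linarith
    exact (mul_eq_zero.1 this).resolve_right (by linarith)
  have z2 : A.2 ^ 2 = 0 := by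
    rw [div_eq_div_iff hQ'.ne' hQ.ne'] at e2
    have : A.2 ^ 2 * (α - lam) = 0 := by linarith
    exact (mul_eq_zero.1 this).resolve_right (by linarith)
  rw [z1, z2] at h
  simp at h

lemma crf_tangent {a b α : ℝ} (hP : 0 < a - α) (hQ : 0 < b - α) {X A : ℝ × ℝ} (hne : A ≠ X)
    (h : TangentAt (confocalConic a b α) X A X) :
    X.1 * A.1 / (a - α) + X.2 * A.2 / (b - α) = 1 := by
  obtain ⟨hX, -, hu⟩ := h
  have hX' : X.1 ^ 2 / (a - α) + X.2 ^ 2 / (b - α) = 1 := hX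
  set v1 := A.1 - X.1 with hv1
  set v2 := A.2 - X.2 with hv2
  have hv : v1 ≠ 0 ∨ v2 ≠ 0 := by
    by_contra hcon
    push Not at hcon
    exact hne (Prod.ext (by linarith [hcon.1]) (by linarith [hcon.2]))
  set q := v1 ^ 2 / (a - α) + v2 ^ 2 / (b - α) with hq
  have hqpos : 0 < q := by
    rcases hv with hv | hv
    · have : 0 < v1 ^ 2 / (a - α) := by positivity
      have : 0 ≤ v2 ^ 2 / (b - α) := by positivity
      linarith
    · have : 0 ≤ v1 ^ 2 / (a - α) := by positivity
      have : 0 < v2 ^ 2 / (b - α) := by positivity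
      linarith
  set B := X.1 * v1 / (a - α) + X.2 * v2 / (b - α) with hB
  set t := -2 * B / q with ht
  have htq : t * q = -2 * B := by rw [ht]; field_simp
  have hZ : X + t • (A - X) ∈ confocalConic a b α := by
    simp only [confocalConic, Set.mem_ofPred_eq, Prod.fst_add, Prod.snd_add, Prod.smul_fst,
      Prod.smul_snd, Prod.fst_sub, Prod.snd_sub, smul_eq_mul, ← hv1, ← hv2]
    have : (X.1 + t * v1) ^ 2 / (a - α) + (X.2 + t * v2) ^ 2 / (b - α)
      = (X.1 ^ 2 / (a - α) + X.2 ^ 2 / (b - α)) + t * (2 * B + t * q) := by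
      rw [hB, hq]; ring
    rw [this, htq, hX']; ring
  have hZX := hu _ hZ ⟨t, rfl⟩
  have h1 := congrArg Prod.fst hZX
  have h2 := congrArg Prod.snd hZX
  simp only [Prod.fst_add, Prod.snd_add, Prod.smul_fst,
      Prod.smul_snd, Prod.fst_sub, Prod.snd_sub, smul_eq_mul, ← hv1, ← hv2] at h1 h2
  have ht0 : t = 0 := by
    rcases hv with hv | hv
    · exact (mul_eq_zero.1 (by linarith : t * v1 = 0)).resolve_right hv
    · exact (mul_eq_zero.1 (by linarith : t * v2 = 0)).resolve_right hv
  have hB0 : B = 0 := by rw [ht0] at htq; linarith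
  have : X.1 * A.1 / (a - α) + X.2 * A.2 / (b - α)
      = B + (X.1 ^ 2 / (a - α) + X.2 ^ 2 / (b - α)) := by
    rw [hB, hv1, hv2]; ring
  rw [this, hB0, hX', zero_add]

lemma crf_tangent_flip {E : Set (ℝ × ℝ)} {A Y : ℝ × ℝ} (h : TangentAt E A Y Y) :
    TangentAt E Y A Y := by
  obtain ⟨h1, -, h3⟩ := h
  refine ⟨h1, ⟨0, by simp⟩, ?_⟩
  rintro Z hZ ⟨t, ht⟩
  refine h3 Z hZ ⟨1 - t, ?_⟩
  rw [ht]
  ext <;> simp <;> ring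

set_option maxHeartbeats 2000000 in
lemma crf_ne {a b α lam : ℝ} (hP : 0 < a - α) (hQ : 0 < b - α) (hlam : lam < α)
    {A X : ℝ × ℝ} (hA : A ∈ confocalConic a b lam) (hX : X ∈ confocalConic a b α)
    (hne : A ≠ X) (ht : X.1 * A.1 / (a - α) + X.2 * A.2 / (b - α) = 1) :
    ¬ ∃ c : ℝ, 0 < c ∧ X - A = c • billiardReflect a b lam A (A - X) := by
  rintro ⟨c, hc, h⟩
  have hP' : 0 < a - lam := by linarith
  have hQ' : 0 < b - lam := by linarith
  simp only [confocalConic, Set.mem_ofPred_eq] at hA hX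
  simp only [billiardReflect] at h
  set n1 := A.1 / (a - lam) with hn1
  set n2 := A.2 / (b - lam) with hn2
  set r := 2 * (((A - X).1 * n1 + (A - X).2 * n2) / (n1 * n1 + n2 * n2)) with hr
  have h1 := congrArg Prod.fst h
  have h2 := congrArg Prod.snd h
  simp only [Prod.smul_fst, Prod.smul_snd, Prod.fst_sub, Prod.snd_sub, smul_eq_mul] at h1 h2
  clear_value r
  set τ := c * r / (1 + c) with hτ
  have hc1 : 1 + c ≠ 0 := by positivity
  have e1 : A.1 - X.1 = τ * n1 := by
    rw [hτ]; field_simp; linarith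
  have e2 : A.2 - X.2 = τ * n2 := by
    rw [hτ]; field_simp; linarith
  have a1 : A.1 = (a - lam) * n1 := by rw [hn1]; field_simp
  have a2 : A.2 = (b - lam) * n2 := by rw [hn2]; field_simp
  have x1 : X.1 = (a - lam - τ) * n1 := by linarith
  have x2 : X.2 = (b - lam - τ) * n2 := by linarith
  clear_value n1 n2 τ
  rw [x1, x2, a1, a2] at ht
  rw [a1, a2] at hA
  rw [x1, x2] at hX
  have hA' : n1 ^ 2 * (a - lam) + n2 ^ 2 * (b - lam) = 1 := by
    rw [← hA]; field_simp
  have ht2 : τ * (n1 ^ 2 * (a - lam - τ) / (a - α) + n2 ^ 2 * (b - lam - τ) / (b - α)) = 0 := by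
    linear_combination ht - hX
  have hτ0 : τ ≠ 0 := by
    rintro rfl
    exact hne (Prod.ext (by linarith) (by linarith))
  have ht3 := (mul_eq_zero.1 ht2).resolve_left hτ0
  have hX3 : n1 ^ 2 * (a - lam - τ) + n2 ^ 2 * (b - lam - τ) = 1 := by
    have : n1 ^ 2 * (a - lam - τ) + n2 ^ 2 * (b - lam - τ) =
      (((a - lam - τ) * n1) ^ 2 / (a - α) + ((b - lam - τ) * n2) ^ 2 / (b - α))
      - (α - lam - τ) *
        (n1 ^ 2 * (a - lam - τ) / (a - α) + n2 ^ 2 * (b - lam - τ) / (b - α)) := by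
      field_simp
      ring
    rw [this, ht3, hX]; ring
  have hn : τ * (n1 ^ 2 + n2 ^ 2) = 0 := by linarith
  have hn' := (mul_eq_zero.1 hn).resolve_left hτ0
  have z1 : n1 ^ 2 = 0 :=
    le_antisymm (by linarith [sq_nonneg n1, sq_nonneg n2]) (sq_nonneg _)
  have z2 : n2 ^ 2 = 0 :=
    le_antisymm (by linarith [sq_nonneg n1, sq_nonneg n2]) (sq_nonneg _)
  rw [z1, z2] at hA'
  simp at hA'

lemma crf_geom {a b α lam : ℝ} (hP : 0 < a - α) (hQ : 0 < b - α) (hlam : lam < α)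
    {A : ℝ × ℝ} (hA : A ∈ confocalConic a b lam) {θ₁ θ₂ : ℝ}
    (hne : ¬ (Real.cos θ₁ = Real.cos θ₂ ∧ Real.sin θ₁ = Real.sin θ₂))
    (h1 : √(a - α) * Real.cos θ₁ * A.1 / (a - α) + √(b - α) * Real.sin θ₁ * A.2 / (b - α) = 1)
    (h2 : √(a - α) * Real.cos θ₂ * A.1 / (a - α) + √(b - α) * Real.sin θ₂ * A.2 / (b - α) = 1) :
    Real.cos (θ₂ - θ₁) = ((a - α) / (a - α + (α - lam)) + (b - α) / (b - α + (α - lam)) - 1)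
      + ((a - α) / (a - α + (α - lam)) - (b - α) / (b - α + (α - lam))) * Real.cos (θ₂ + θ₁) := by
  set p := √(a - α) with hp
  set q := √(b - α) with hq
  have hp0 : 0 < p := Real.sqrt_pos.2 hP
  have hq0 : 0 < q := Real.sqrt_pos.2 hQ
  have hp2 : a - α = p ^ 2 := (Real.sq_sqrt hP.le).symm
  have hq2 : b - α = q ^ 2 := (Real.sq_sqrt hQ.le).symm
  set u := A.1 / p with hu
  set v := A.2 / q with hv
  have a1 : A.1 = p * u := by rw [hu]; field_simp
  have a2 : A.2 = q * v := by rw [hv]; field_simp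
  set F := (a - α) / (a - α + (α - lam)) with hF
  set G := (b - α) / (b - α + (α - lam)) with hG
  have hA' : F * u ^ 2 + G * v ^ 2 = 1 := by
    have hA2 : A.1 ^ 2 / (a - lam) + A.2 ^ 2 / (b - lam) = 1 := hA
    rw [← hA2, a1, a2, hF, hG, mul_pow, mul_pow, ← hp2, ← hq2]
    rw [sub_add_sub_cancel, sub_add_sub_cancel]
    ring
  have h1' : Real.cos θ₁ * u + Real.sin θ₁ * v = 1 := by
    rw [← h1, a1, a2, hp2, hq2]; field_simp
  have h2' : Real.cos θ₂ * u + Real.sin θ₂ * v = 1 := by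
    rw [← h2, a1, a2, hp2, hq2]; field_simp
  clear_value u v F G
  set s := (θ₂ + θ₁) / 2 with hs
  set d := (θ₂ - θ₁) / 2 with hd
  have t1 : θ₁ = s - d := by rw [hs, hd]; ring
  have t2 : θ₂ = s + d := by rw [hs, hd]; ring
  clear_value s d
  subst t1 t2
  have hsd : Real.sin d ≠ 0 := by
    intro h0
    apply hne
    rw [Real.cos_sub, Real.cos_add, Real.sin_sub, Real.sin_add, h0]
    constructor <;> ring
  have g1 : s + d - (s - d) = 2 * d := by ring
  have g2 : s + d + (s - d) = 2 * s := by ring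
  rw [g1, g2]
  rw [Real.cos_sub, Real.sin_sub] at h1'
  rw [Real.cos_add, Real.sin_add] at h2'
  have l1 : (Real.cos s * u + Real.sin s * v) * Real.cos d = 1 := by linarith
  have l2 : (Real.cos s * v - Real.sin s * u) = 0 := by
    have : Real.sin d * (Real.cos s * v - Real.sin s * u) = 0 := by linarith
    exact (mul_eq_zero.1 this).resolve_left hsd
  have hcs := Real.sin_sq_add_cos_sq s
  have m1 : u * Real.cos d = Real.cos s := by
    linear_combination Real.cos s * l1 - Real.sin s * Real.cos d * l2 - u * Real.cos d * hcs
  have m2 : v * Real.cos d = Real.sin s := by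
    linear_combination Real.sin s * l1 + Real.cos s * Real.cos d * l2 - v * Real.cos d * hcs
  have m3 : F * Real.cos s ^ 2 + G * Real.sin s ^ 2 = Real.cos d ^ 2 := by
    rw [← m1, ← m2]; linear_combination Real.cos d ^ 2 * hA'
  rw [Real.cos_two_mul, Real.cos_two_mul]
  linear_combination (-2) * m3 + 2 * G * hcs

theorem exists_rotation_function
    (a b alpha0 : ℝ) (hab : a > b) (hb : b > 0) (h0 : 0 < alpha0) (hα : alpha0 < b) :
    ∃ (h : ↥(confocalConic a b alpha0) ≃ₜ AddCircle (1 : ℝ)) (ρ : ℝ → ℝ),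
      ∀ lam : ℝ, lam < alpha0 →
        ∀ (X Y : ↥(confocalConic a b alpha0)) (A : ℝ × ℝ),
          A ∈ confocalConic a b lam →
          TangentAt (confocalConic a b alpha0) (X : ℝ × ℝ) A (X : ℝ × ℝ) →
          TangentAt (confocalConic a b alpha0) A (Y : ℝ × ℝ) (Y : ℝ × ℝ) →
          (∃ c : ℝ, 0 < c ∧
            (Y : ℝ × ℝ) - A = c • billiardReflect a b lam A (A - (X : ℝ × ℝ))) →
          (h Y - h X = ((ρ lam : ℝ) : AddCircle (1 : ℝ)) ∨
            h Y - h X = -((ρ lam : ℝ) : AddCircle (1 : ℝ))) := by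
  have hQ : 0 < b - alpha0 := by linarith
  have hP : 0 < a - alpha0 := by linarith
  obtain ⟨T, L, hL, hTd, hT⟩ := crf_exists_T hP hQ
  have hmono : StrictMono T := by
    apply strictMono_of_deriv_pos
    intro θ
    rw [(hTd θ).deriv]
    have := Real.sqrt_pos.2 (crfW2_pos hP hQ θ)
    positivity
  have hcont : Continuous T :=
    continuous_iff_continuousAt.2 fun θ => (hTd θ).continuousAt
  obtain ⟨h, hh⟩ := crf_homeo hP hQ hmono hcont hT
  let Kf : ℝ → ℝ := fun lam => (a - alpha0) / (a - alpha0 + (alpha0 - lam)) +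
    (b - alpha0) / (b - alpha0 + (alpha0 - lam)) - 1
  let Df : ℝ → ℝ := fun lam => (a - alpha0) / (a - alpha0 + (alpha0 - lam)) -
    (b - alpha0) / (b - alpha0 + (alpha0 - lam))
  refine ⟨h, fun lam => T (0 + crfDelta (Kf lam) (Df lam) 0)
    - T (0 - crfDelta (Kf lam) (Df lam) 0), ?_⟩
  intro lam hlam X Y A hA hXA hAY hrefl
  have hout := crf_outside hP hQ hlam hA
  have hAX : A ≠ X := fun h => hout (h ▸ X.2)
  have hAYne : A ≠ Y := fun h => hout (h ▸ Y.2)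
  have tX := crf_tangent hP hQ hAX hXA
  have tY := crf_tangent hP hQ hAYne (crf_tangent_flip hAY)
  have hXY : X ≠ Y := by
    rintro rfl
    exact crf_ne hP hQ hlam hA X.2 hAX tX hrefl
  have par : ∀ Z : ↥(confocalConic a b alpha0), ∃ θ : ℝ,
      (Z : ℝ × ℝ) = (√(a - alpha0) * Real.cos θ, √(b - alpha0) * Real.sin θ) := by
    rintro ⟨⟨x, y⟩, hZ⟩
    have hZ' : x ^ 2 / (a - alpha0) + y ^ 2 / (b - alpha0) = 1 := hZ
    have h1 : (x / √(a - alpha0)) ^ 2 + (y / √(b - alpha0)) ^ 2 = 1 := by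
      rw [div_pow, div_pow, Real.sq_sqrt hP.le, Real.sq_sqrt hQ.le]; exact hZ'
    obtain ⟨θ, h2, h3⟩ := crf_circle h1
    have := Real.sqrt_pos.2 hP
    have := Real.sqrt_pos.2 hQ
    refine ⟨θ, ?_⟩
    simp only [← h2, ← h3]
    congr 1 <;> field_simp
  obtain ⟨θ₁, hθ₁⟩ := par X
  obtain ⟨θ₂, hθ₂⟩ := par Y
  rw [hh X θ₁ hθ₁, hh Y θ₂ hθ₂]
  rw [hθ₁] at tX
  rw [hθ₂] at tY
  have hne : ¬ (Real.cos θ₁ = Real.cos θ₂ ∧ Real.sin θ₁ = Real.sin θ₂) := by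
    rintro ⟨c1, c2⟩
    apply hXY
    apply Subtype.ext
    rw [hθ₁, hθ₂, c1, c2]
  have hrel := crf_geom hP hQ hlam hA hne tX tY
  obtain ⟨k, hk⟩ := crf_relation hQ (by linarith : b - alpha0 < a - alpha0)
    (by linarith : 0 < alpha0 - lam) hL hTd hT (K := Kf lam) (D := Df lam) rfl rfl hrel
  rw [← AddCircle.coe_sub, ← AddCircle.coe_neg]
  rcases hk with hk | hk
  · left; rw [hk, crf_coe_add_int]
  · right; rw [hk, crf_coe_add_int]
end

section
/- Let f be an irreducible billiard-like interval exchange transformation of I = [−1, 1) satisfying the modified Keane condition. Then f is minimal: for every x ∈ I, the forward orbit {f^n(x) : n ≥ 0} is dense in I. -/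
/-- An interval exchange transformation of `I = [−1, 1)`: a bijection `f` of `I` together
with a finite partition of `I` into `d ≥ 2` intervals, closed on the left and open on the
right, with left endpoints `p 0 = −1 < p 1 < … < p (d−1) < 1`, such that the restriction
of `f` to each interval of the partition is a translation. -/
structure IntervalExchange where
  d : ℕ
  two_le : 2 ≤ d
  p : Fin d → ℝ
  mono : StrictMono p
  first : ∀ h : 0 < d, p ⟨0, h⟩ = -1
  lt_one : ∀ i, p i < 1
  f : ℝ → ℝ
  bij : Set.BijOn f (Set.Ico (-1) 1) (Set.Ico (-1) 1)
  translate : ∀ i : Fin d, ∃ t : ℝ,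
    ∀ x ∈ Set.Ico (p i) (if h : (i : ℕ) + 1 < d then p ⟨(i : ℕ) + 1, h⟩ else 1),
      f x = x + t

namespace IntervalExchange

/-- The `i`-th interval of the partition. -/
def piece (T : IntervalExchange) (i : Fin T.d) : Set ℝ :=
  Set.Ico (T.p i) (if h : (i : ℕ) + 1 < T.d then T.p ⟨(i : ℕ) + 1, h⟩ else 1)

/-- A billiard-like interval exchange transformation: `0` is one of the left endpoints,
each interval of the partition is contained either in `[−1, 0)` or in `[0, 1)`, each image
of an interval of the partition is contained either in `[−1, 0)` or in `[0, 1)`, and both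
`[−1, 0)` and `[0, 1)` contain at least two intervals of the partition. -/
def BilliardLike (T : IntervalExchange) : Prop :=
  (∃ i, T.p i = 0) ∧
  (∀ i, T.piece i ⊆ Set.Ico (-1) 0 ∨ T.piece i ⊆ Set.Ico 0 1) ∧
  (∀ i, T.f '' T.piece i ⊆ Set.Ico (-1) 0 ∨ T.f '' T.piece i ⊆ Set.Ico 0 1) ∧
  (∃ i j : Fin T.d, i ≠ j ∧ T.piece i ⊆ Set.Ico (-1) 0 ∧ T.piece j ⊆ Set.Ico (-1) 0) ∧
  (∃ i j : Fin T.d, i ≠ j ∧ T.piece i ⊆ Set.Ico 0 1 ∧ T.piece j ⊆ Set.Ico 0 1)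

/-- The modified Keane condition: no iterate of a left endpoint of the partition hits a
left endpoint other than `−1` and `0`. -/
def ModifiedKeane (T : IntervalExchange) : Prop :=
  ∀ m : ℕ, 1 ≤ m → ∀ i j : Fin T.d, T.p j ≠ -1 → T.p j ≠ 0 →
    T.f^[m] (T.p i) ≠ T.p j

end IntervalExchange

/-- Irreducibility: for no `k < d` is the union of the first `k` intervals of the
partition invariant under the transformation. -/
def IntervalExchange.Irreducible (T : IntervalExchange) : Prop :=
  ∀ k : ℕ, 0 < k → k < T.d →
    T.f '' (⋃ i : Fin T.d, ⋃ (_ : (i : ℕ) < k), T.piece i) ≠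
      ⋃ i : Fin T.d, ⋃ (_ : (i : ℕ) < k), T.piece i

open Set Filter Topology

namespace IETProof

/-- A piecewise translation of `[-1,1)` with break points in `D`. -/
def PT (g : ℝ → ℝ) (D : Set ℝ) : Prop :=
  BijOn g (Ico (-1) 1) (Ico (-1) 1) ∧ D.Finite ∧
    ∀ u ∈ Ico (-1 : ℝ) 1, ∀ v ∈ Ico (-1 : ℝ) 1, u ≤ v → (∀ w ∈ D, u < w → v < w) →
      g v = g u + (v - u)

lemma iter_mem {g : ℝ → ℝ} {D : Set ℝ} (h : PT g D) (n : ℕ) {x : ℝ} (hx : x ∈ Ico (-1 : ℝ) 1) :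
    g^[n] x ∈ Ico (-1 : ℝ) 1 := (h.1.mapsTo.iterate n) hx

lemma iter_inj {g : ℝ → ℝ} {D : Set ℝ} (h : PT g D) (n : ℕ) :
    InjOn g^[n] (Ico (-1 : ℝ) 1) := h.1.injOn.iterate h.1.mapsTo n

/-- cancel iterates -/
lemma iter_cancel {g : ℝ → ℝ} {D : Set ℝ} (h : PT g D) {k l : ℕ} (hkl : k ≤ l) {x y : ℝ}
    (hx : x ∈ Ico (-1 : ℝ) 1) (hy : y ∈ Ico (-1 : ℝ) 1) (e : g^[l] x = g^[k] y) :
    g^[l - k] x = y := by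
  apply iter_inj h k (iter_mem h _ hx) hy
  rw [← Function.iterate_add_apply, Nat.add_sub_cancel' hkl, e]

lemma finite_pre {g : ℝ → ℝ} {D : Set ℝ} (h : PT g D) (N : ℕ) {S : Set ℝ} (hS : S.Finite) :
    {c | c ∈ Ico (-1 : ℝ) 1 ∧ ∃ k ≤ N, g^[k] c ∈ S}.Finite := by
  have : {c | c ∈ Ico (-1 : ℝ) 1 ∧ ∃ k ≤ N, g^[k] c ∈ S} ⊆
      ⋃ k ∈ Finset.range (N + 1), {c | c ∈ Ico (-1 : ℝ) 1 ∧ g^[k] c ∈ S} := by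
    rintro c ⟨hc, k, hk, hs⟩
    simp only [mem_iUnion]
    exact ⟨k, Finset.mem_range.2 (by omega), hc, hs⟩
  refine Set.Finite.subset ?_ this
  refine Set.Finite.biUnion (Finset.finite_toSet _) ?_
  intro k _
  exact Set.Finite.of_injOn (f := g^[k]) (t := S) (fun c hc => hc.2)
    ((iter_inj h k).mono fun c hc => hc.1) hS

/-- pigeonhole -/
lemma pigeon (s : ℕ → ℝ) (hs : ∀ n, s n ∈ Ico (-1 : ℝ) 1) {δ : ℝ} (hδ : 0 < δ) :
    ∃ k l, k < l ∧ |s l - s k| < δ := by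
  obtain ⟨a, _, φ, hφ, hlim⟩ := (isCompact_Icc (a := (-1 : ℝ)) (b := 1)).tendsto_subseq
    (fun n => Ico_subset_Icc_self (hs n))
  have hc := hlim.cauchySeq
  rw [Metric.cauchySeq_iff'] at hc
  obtain ⟨N, hN⟩ := hc δ hδ
  refine ⟨φ N, φ (N + 1), hφ (by omega), ?_⟩
  have := hN (N + 1) (by omega)
  simpa [Real.dist_eq] using this

/-- Break points of the first return. -/
def EE (g : ℝ → ℝ) (D : Set ℝ) (a b : ℝ) : Set ℝ :=
  {e | e ∈ Ico a b ∧ ∃ k, (g^[k] e ∈ D ∨ g^[k] e = a ∨ g^[k] e = b) ∧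
    ∀ i, 0 < i → i < k → g^[i] e ∉ Ico a b}

lemma EE_finite {g : ℝ → ℝ} {D : Set ℝ} (h : PT g D) {a b : ℝ}
    (ha : -1 ≤ a) (hb : b ≤ 1) : (EE g D a b).Finite := by
  set V : Set ℝ := D ∪ {a, b} with hV
  have hVf : V.Finite := h.2.1.union (by simp)
  have hJ : ∀ x ∈ Ico a b, x ∈ Ico (-1 : ℝ) 1 := fun x hx => ⟨ha.trans hx.1, hx.2.trans_le hb⟩
  have hsub : EE g D a b ⊆ V ∪ ⋃ v ∈ V, {e | e ∈ Ico a b ∧ ∃ k, 1 ≤ k ∧ g^[k] e = v ∧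
      ∀ i, 0 < i → i < k → g^[i] e ∉ Ico a b} := by
    rintro e ⟨he, k, hk, hi⟩
    have hkV : g^[k] e ∈ V := by
      simp only [hV, mem_union, mem_insert_iff, mem_singleton_iff]; tauto
    rcases Nat.eq_zero_or_pos k with rfl | hk0
    · left; exact hkV
    · right
      simp only [mem_iUnion]
      exact ⟨_, hkV, he, k, hk0, rfl, hi⟩
  refine (hVf.union (hVf.biUnion ?_)).subset hsub
  intro v _
  apply Set.Subsingleton.finite
  have key : ∀ e e' : ℝ, e ∈ Ico a b → e' ∈ Ico a b → ∀ k k', 1 ≤ k → k ≤ k' →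
      g^[k] e = v → g^[k'] e' = v → (∀ i, 0 < i → i < k' → g^[i] e' ∉ Ico a b) → e = e' := by
    intro e e' he he' k k' hk hkk h1 h2 h3
    have h4 := iter_cancel h hkk (hJ _ he') (hJ _ he) (h2.trans h1.symm)
    rcases hkk.eq_or_lt with rfl | hlt
    · simpa using h4.symm
    · exact absurd (h4 ▸ he) (h3 _ (by omega) (by omega))
  rintro e ⟨he, k, hk, h1, h2⟩ e' ⟨he', k', hk', h1', h2'⟩
  rcases le_total k k' with hh | hh
  · exact key e e' he he' k k' hk hh h1 h1' h2'
  · exact (key e' e he' he k' k hk' hh h1' h1 h2).symm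

lemma EE_step {g : ℝ → ℝ} {D : Set ℝ} (h : PT g D) {a b : ℝ}
    (ha : -1 ≤ a) (hb : b ≤ 1) {e z : ℝ} (he : e ∈ Ico a b) (hz : z < b)
    (hE : ∀ w ∈ EE g D a b, e < w → z < w) (k : ℕ) :
    (∀ i, 0 < i → i < k → g^[i] e ∉ Ico a b) →
    ∀ z', e ≤ z' → z' ≤ z → g^[k] z' = g^[k] e + (z' - e) ∧
      ∀ i, 0 < i → i < k → g^[i] z' ∉ Ico a b := by
  have hJ : ∀ x ∈ Ico a b, x ∈ Ico (-1 : ℝ) 1 := fun x hx => ⟨ha.trans hx.1, hx.2.trans_le hb⟩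
  induction k with
  | zero => intro _ z' _ _; simp
  | succ k ih =>
    intro hret z' h1 h2
    have ih' := ih (fun i hi hik => hret i hi (by omega))
    have hz'J : z' ∈ Ico a b := ⟨he.1.trans h1, h2.trans_lt hz⟩
    -- any value in between that is special gives a contradiction
    have special : ∀ w, g^[k] e < w → w ≤ g^[k] z' → (w ∈ D ∨ w = a ∨ w = b) → False := by
      intro w hw1 hw2 hw3
      have hzz := (ih' z' h1 h2).1
      set z'' := e + (w - g^[k] e) with hz''
      have h3 : e < z'' := by linarith
      have h4 : z'' ≤ z' := by linarith
      obtain ⟨h5, h6⟩ := ih' z'' h3.le (h4.trans h2)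
      have h7 : g^[k] z'' = w := by rw [h5]; simp [hz'']
      have h8 : z'' ∈ EE g D a b :=
        ⟨⟨he.1.trans h3.le, h4.trans_lt hz'J.2⟩, k, by rw [h7]; exact hw3, h6⟩
      have := hE _ h8 h3
      linarith
    constructor
    · rw [Function.iterate_succ_apply', Function.iterate_succ_apply']
      have hzz := (ih' z' h1 h2).1
      rw [h.2.2 (g^[k] e) (iter_mem h k (hJ _ he)) (g^[k] z') (iter_mem h k (hJ _ hz'J))
        (by linarith) ?_]
      · linarith
      · intro w hw hlt
        by_contra hcon
        exact special w hlt (not_lt.1 hcon) (Or.inl hw)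
    · intro i hi hik
      rcases Nat.lt_succ_iff_lt_or_eq.1 hik with hlt | rfl
      · exact (ih' z' h1 h2).2 i hi hlt
      · intro hmem
        have hzz := (ih' z' h1 h2).1
        have hne := hret i hi (by omega)
        have hlt : g^[i] e < a := by
          by_contra hcon
          exact hne ⟨not_lt.1 hcon, by linarith [hmem.2]⟩
        exact special a hlt hmem.1 (Or.inr (Or.inl rfl))

lemma EE_return {g : ℝ → ℝ} {D : Set ℝ} (h : PT g D) {a b : ℝ}
    (ha : -1 ≤ a) (hb : b ≤ 1) {e : ℝ} (he : e ∈ Ico a b) :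
    ∃ n, 1 ≤ n ∧ g^[n] e ∈ Ico a b := by
  have hJ : ∀ x ∈ Ico a b, x ∈ Ico (-1 : ℝ) 1 := fun x hx => ⟨ha.trans hx.1, hx.2.trans_le hb⟩
  by_contra hcon
  push Not at hcon
  -- choose δ
  have hev : ∀ᶠ z in 𝓝[>] e, z < b ∧ e < z ∧ ∀ w ∈ EE g D a b, e < w → z < w := by
    refine (eventually_nhdsWithin_of_eventually_nhds (eventually_lt_nhds he.2)).and
      (eventually_mem_nhdsWithin.and ?_)
    rw [eventually_all_finite (EE_finite h ha hb)]
    intro w _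
    by_cases hw : e < w
    · filter_upwards [eventually_nhdsWithin_of_eventually_nhds (eventually_lt_nhds hw)] with z hz _
      exact hz
    · exact Eventually.of_forall fun z hz => absurd hz hw
  obtain ⟨z, hzb, hez, hE⟩ := hev.exists
  obtain ⟨k, l, hkl, hd⟩ := pigeon (fun n => g^[n] e) (fun n => iter_mem h n (hJ _ he))
    (sub_pos.2 hez)
  have tr : ∀ n z', e ≤ z' → z' ≤ z → g^[n] z' = g^[n] e + (z' - e) := fun n z' h1 h2 =>
    (EE_step h ha hb he hzb hE n (fun i hi _ => hcon i hi) z' h1 h2).1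
  have ntr : ∀ n z', 1 ≤ n → e ≤ z' → z' ≤ z → g^[n] z' ∉ Ico a b := fun n z' hn h1 h2 =>
    (EE_step h ha hb he hzb hE (n + 1) (fun i hi _ => hcon i hi) z' h1 h2).2 n hn (by omega)
  rw [abs_lt] at hd
  rcases le_total (g^[k] e) (g^[l] e) with hh | hh
  · have h1 := tr k (e + (g^[l] e - g^[k] e)) (by linarith) (by linarith)
    have hm : e + (g^[l] e - g^[k] e) ∈ Ico a b := ⟨by linarith [he.1], by linarith⟩
    have h2 := iter_cancel h hkl.le (hJ _ he) (hJ _ hm) (by rw [h1]; ring)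
    exact hcon (l - k) (by omega) (h2 ▸ hm)
  · have h1 := tr l (e + (g^[k] e - g^[l] e)) (by linarith) (by linarith)
    have hm : e + (g^[k] e - g^[l] e) ∈ Ico a b := ⟨by linarith [he.1], by linarith⟩
    have h2 := iter_cancel h hkl.le (hJ _ hm) (hJ _ he) (by rw [h1]; ring)
    exact ntr (l - k) _ (by omega) (by linarith) (by linarith) (h2 ▸ he)

lemma return_bound {g : ℝ → ℝ} {D : Set ℝ} (h : PT g D) {a b : ℝ}
    (ha : -1 ≤ a) (hb : b ≤ 1) :
    ∃ N, ∀ z ∈ Ico a b, ∃ n, 1 ≤ n ∧ n ≤ N ∧ g^[n] z ∈ Ico a b := by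
  classical
  have hr : ∀ e ∈ Ico a b, ∃ n, (1 ≤ n ∧ g^[n] e ∈ Ico a b) ∧
      ∀ i, 0 < i → i < n → g^[i] e ∉ Ico a b := by
    intro e he
    have hex := EE_return h ha hb he
    refine ⟨Nat.find hex, Nat.find_spec hex, fun i hi hin hm => Nat.find_min hex hin ⟨hi, hm⟩⟩
  choose! r hr1 hr2 using hr
  have hfin := EE_finite h ha hb
  obtain ⟨N, hN⟩ := (hfin.image r).bddAbove
  refine ⟨N, fun z hz => ?_⟩
  have haE : a ∈ EE g D a b :=
    ⟨⟨le_rfl, hz.1.trans_lt hz.2⟩, 0, by simp, fun i hi hi' => by omega⟩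
  have hfin2 : (EE g D a b ∩ Iic z).Finite := hfin.subset inter_subset_left
  obtain ⟨e, heE, hmax⟩ := hfin2.exists_maximalFor id _ ⟨a, haE, hz.1⟩
  have he := heE.1.1
  have hE : ∀ w ∈ EE g D a b, e < w → z < w := by
    intro w hw hew
    by_contra hcon
    exact absurd (hmax ⟨hw, not_lt.1 hcon⟩ hew.le) (not_le.2 hew)
  refine ⟨r e, (hr1 e he).1, hN ⟨e, heE.1, rfl⟩, ?_⟩
  have st := EE_step h ha hb he hz.2 hE (r e) (hr2 e he)
  have htr := (st z heE.2 le_rfl).1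
  have hez : e ≤ z := heE.2
  refine ⟨by linarith [(hr1 e he).2.1], ?_⟩
  by_contra hcon
  rw [not_lt] at hcon
  have hlt := (hr1 e he).2.2
  set z'' := e + (b - g^[r e] e) with hz''
  have h3 : e < z'' := by linarith
  have h4 : z'' ≤ z := by linarith
  obtain ⟨h5, h6⟩ := st z'' h3.le h4
  have h7 : g^[r e] z'' = b := by rw [h5]; simp [hz'']
  have h8 : z'' ∈ EE g D a b :=
    ⟨⟨he.1.trans h3.le, h4.trans_lt hz.2⟩, r e, by rw [h7]; simp, h6⟩
  have := hE _ h8 h3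
  linarith

/-! ### Germs -/

lemma tend_nhds (c c' : ℝ) : Tendsto (fun z => c' + (z - c)) (𝓝 c) (𝓝 c') := by
  have : Continuous (fun z => c' + (z - c)) := by fun_prop
  simpa using this.tendsto c

lemma tend_lt (c c' : ℝ) : Tendsto (fun z => c' + (z - c)) (𝓝[<] c) (𝓝[<] c') := by
  refine tendsto_nhdsWithin_iff.2 ⟨(tend_nhds c c').mono_left nhdsWithin_le_nhds, ?_⟩
  filter_upwards [eventually_mem_nhdsWithin] with z hz
  simp only [mem_Iio] at *; linarith

lemma tend_ge (c c' : ℝ) : Tendsto (fun z => c' + (z - c)) (𝓝[≥] c) (𝓝[≥] c') := by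
  refine tendsto_nhdsWithin_iff.2 ⟨(tend_nhds c c').mono_left nhdsWithin_le_nhds, ?_⟩
  filter_upwards [eventually_mem_nhdsWithin] with z hz
  simp only [mem_Ici] at *; linarith

lemma germ {g : ℝ → ℝ} {D : Set ℝ} (h : PT g D) (hD : -1 ∈ D) {c : ℝ}
    (hc : c ∈ Ico (-1 : ℝ) 1) (hcD : c ∉ D) :
    ∀ᶠ z in 𝓝 c, z ∈ Ico (-1 : ℝ) 1 ∧ g z = g c + (z - c) := by
  have h1 : -1 < c := lt_of_le_of_ne hc.1 (fun e => hcD (e ▸ hD))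
  have h2 : ∀ᶠ z in 𝓝 c, ∀ w ∈ D, (c < w → z < w) ∧ (z < w → c < w) := by
    rw [eventually_all_finite h.2.1]
    intro w hw
    rcases lt_trichotomy c w with hlt | heq | hgt
    · filter_upwards [eventually_lt_nhds hlt] with z hz
      exact ⟨fun _ => hz, fun _ => hlt⟩
    · exact absurd (heq ▸ hw) hcD
    · filter_upwards [eventually_gt_nhds hgt] with z hz
      exact ⟨fun h => absurd h hgt.le.not_gt, fun h => absurd h (le_of_lt hz).not_gt⟩
  filter_upwards [h2, eventually_gt_nhds h1, eventually_lt_nhds hc.2] with z hz hz1 hz2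
  have hzI : z ∈ Ico (-1 : ℝ) 1 := ⟨le_of_lt hz1, hz2⟩
  refine ⟨hzI, ?_⟩
  rcases le_total c z with hh | hh
  · exact h.2.2 c hc z hzI hh fun w hw => (hz w hw).1
  · have := h.2.2 z hzI c hc hh fun w hw => (hz w hw).2
    linarith

lemma germ_ge {g : ℝ → ℝ} {D : Set ℝ} (h : PT g D) {c : ℝ}
    (hc : c ∈ Ico (-1 : ℝ) 1) :
    ∀ᶠ z in 𝓝[≥] c, z ∈ Ico (-1 : ℝ) 1 ∧ g z = g c + (z - c) := by
  have h2 : ∀ᶠ z in 𝓝[≥] c, ∀ w ∈ D, c < w → z < w := by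
    rw [eventually_all_finite h.2.1]
    intro w hw
    by_cases hlt : c < w
    · filter_upwards [eventually_nhdsWithin_of_eventually_nhds (eventually_lt_nhds hlt)] with z hz _
      exact hz
    · exact Eventually.of_forall fun z hz => absurd hz hlt
  filter_upwards [h2, eventually_mem_nhdsWithin,
    eventually_nhdsWithin_of_eventually_nhds (eventually_lt_nhds hc.2)] with z hz hz1 hz2
  have hzI : z ∈ Ico (-1 : ℝ) 1 := ⟨hc.1.trans hz1, hz2⟩
  exact ⟨hzI, h.2.2 c hc z hzI hz1 hz⟩

lemma germ_iter {g : ℝ → ℝ} {D : Set ℝ} (h : PT g D) (hD : -1 ∈ D) {c : ℝ}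
    (hc : c ∈ Ico (-1 : ℝ) 1) (n : ℕ) (hcD : ∀ k < n, g^[k] c ∉ D) :
    ∀ᶠ z in 𝓝 c, g^[n] z = g^[n] c + (z - c) := by
  induction n with
  | zero => exact Eventually.of_forall fun z => by simp
  | succ n ih =>
    filter_upwards [ih fun k hk => hcD k (by omega), (tend_nhds c (g^[n] c)).eventually
      (germ h hD (iter_mem h n hc) (hcD n (by omega)))] with z h1 h2
    rw [Function.iterate_succ_apply', Function.iterate_succ_apply', h1, h2.2]
    ring

lemma germ_iter_ge {g : ℝ → ℝ} {D : Set ℝ} (h : PT g D) {c : ℝ}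
    (hc : c ∈ Ico (-1 : ℝ) 1) (n : ℕ) :
    ∀ᶠ z in 𝓝[≥] c, g^[n] z = g^[n] c + (z - c) := by
  induction n with
  | zero => exact Eventually.of_forall fun z => by simp
  | succ n ih =>
    filter_upwards [ih, (tend_ge c (g^[n] c)).eventually
      (germ_ge h (iter_mem h n hc))] with z h1 h2
    rw [Function.iterate_succ_apply', Function.iterate_succ_apply', h1, h2.2]
    ring

/-- Constancy on an interval. -/
lemma const_on {F : Set ℝ} {l r : ℝ}
    (hL : ∀ c ∈ Ioo l r, ∀ᶠ z in 𝓝[<] c, (z ∈ F ↔ c ∈ F))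
    (hR : ∀ c ∈ Ico l r, ∀ᶠ z in 𝓝[≥] c, (z ∈ F ↔ c ∈ F)) :
    ∀ u ∈ Ico l r, ∀ v ∈ Ico l r, (u ∈ F ↔ v ∈ F) := by
  classical
  intro u hu v hv
  have hcont : ContinuousOn (fun z => decide (z ∈ F)) (Ico l r) := by
    intro c hc
    refine tendsto_nhds_of_eventually_eq ?_
    rcases hc.1.eq_or_lt with rfl | hlt
    · have hle : 𝓝[Ico l r] l ≤ 𝓝[≥] l := nhdsWithin_mono _ fun z hz => hz.1
      filter_upwards [hle (hR l hc)] with z hz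
      simpa using hz
    · have : ∀ᶠ z in 𝓝 c, (z ∈ F ↔ c ∈ F) := by
        rw [← nhdsLT_sup_nhdsGE c]
        exact eventually_sup.2 ⟨hL c ⟨hlt, hc.2⟩, hR c hc⟩
      filter_upwards [nhdsWithin_le_nhds this] with z hz
      simpa using hz
  have := isPreconnected_Ico.constant hcont hu hv
  simpa using this

/-! ### Facts about the interval exchange -/

variable (T : IntervalExchange)

/-- right endpoint -/
noncomputable def rt (i : Fin T.d) : ℝ :=
  if h : (i : ℕ) + 1 < T.d then T.p ⟨(i : ℕ) + 1, h⟩ else 1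

lemma piece_eq (i : Fin T.d) : T.piece i = Ico (T.p i) (rt T i) := rfl

lemma p_lt_rt (i : Fin T.d) : T.p i < rt T i := by
  unfold rt
  split_ifs with h
  · exact T.mono (by simp [Fin.lt_def])
  · exact T.lt_one i

lemma rt_le_one (i : Fin T.d) : rt T i ≤ 1 := by
  unfold rt
  split_ifs with h
  · exact (T.lt_one _).le
  · exact le_rfl

lemma neg_one_mem : (-1 : ℝ) ∈ range T.p :=
  ⟨⟨0, by have := T.two_le; omega⟩, T.first _⟩

lemma p_ge (i : Fin T.d) : -1 ≤ T.p i := by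
  have h0 : 0 < T.d := by have := T.two_le; omega
  rw [← T.first h0]
  exact T.mono.monotone (Fin.le_def.2 (Nat.zero_le _))

lemma p_mem (i : Fin T.d) : T.p i ∈ Ico (-1 : ℝ) 1 := ⟨p_ge T i, T.lt_one i⟩

lemma rt_eq (i : Fin T.d) : rt T i = 1 ∨ rt T i ∈ range T.p := by
  unfold rt
  split_ifs with h
  · exact Or.inr ⟨_, rfl⟩
  · exact Or.inl rfl

lemma rt_le {i j : Fin T.d} (h : i < j) : rt T i ≤ T.p j := by
  unfold rt
  have hj := j.2
  have hlt : (i : ℕ) < j := h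
  rw [dif_pos (by omega)]
  exact T.mono.monotone (Fin.le_def.2 (by simpa using hlt))

lemma exists_piece {c : ℝ} (hc : c ∈ Ico (-1 : ℝ) 1) : ∃ i, T.p i ≤ c ∧ c < rt T i := by
  have h0 : 0 < T.d := by have := T.two_le; omega
  obtain ⟨i, hi, hmax⟩ := (Set.toFinite {i | T.p i ≤ c}).exists_maximalFor id _
    ⟨⟨0, h0⟩, by simpa [T.first h0] using hc.1⟩
  refine ⟨i, hi, ?_⟩
  unfold rt
  split_ifs with h
  · by_contra hcon
    have := hmax (j := ⟨(i : ℕ) + 1, h⟩) (not_lt.1 hcon) (by simp [Fin.le_def])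
    simp [Fin.le_def] at this
  · exact hc.2

lemma translate' (i : Fin T.d) {u v : ℝ} (hu : u ∈ Ico (T.p i) (rt T i))
    (hv : v ∈ Ico (T.p i) (rt T i)) : T.f v = T.f u + (v - u) := by
  obtain ⟨t, ht⟩ := T.translate i
  rw [ht u hu, ht v hv]; ring

lemma pt_f : PT T.f (range T.p) := by
  refine ⟨T.bij, finite_range _, ?_⟩
  intro u hu v hv huv hD
  obtain ⟨i, h1, h2⟩ := exists_piece T hu
  refine translate' T i ⟨h1, h2⟩ ⟨h1.trans huv, ?_⟩
  rcases rt_eq T i with h | h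
  · rw [h]; exact hv.2
  · exact hD _ h h2

lemma pt_inv : PT (Function.invFunOn T.f (Ico (-1) 1)) (T.f '' range T.p) := by
  have hinv := T.bij.invOn_invFunOn
  have hb : BijOn (Function.invFunOn T.f (Ico (-1) 1)) (Ico (-1) 1) (Ico (-1) 1) :=
    BijOn.symm hinv.symm T.bij
  refine ⟨hb, (finite_range _).image _, ?_⟩
  intro u hu v hv huv hD
  have hvI := hb.mapsTo hv
  have hfv := hinv.2 hv
  set v' := Function.invFunOn T.f (Ico (-1) 1) v with hv'
  obtain ⟨i, h1, h2⟩ := exists_piece T hvI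
  have h3 := translate' T i ⟨le_rfl, p_lt_rt T i⟩ ⟨h1, h2⟩
  have h4 : T.f (T.p i) ≤ u := by
    by_contra hcon
    have := hD _ ⟨_, ⟨i, rfl⟩, rfl⟩ (not_le.1 hcon)
    linarith
  have h5 : T.p i + (u - T.f (T.p i)) ∈ Ico (T.p i) (rt T i) :=
    ⟨by linarith, by linarith⟩
  have h6 := translate' T i ⟨le_rfl, p_lt_rt T i⟩ h5
  have h7 : T.f (T.p i + (u - T.f (T.p i))) = u := by rw [h6]; ring
  have h8 : T.p i + (u - T.f (T.p i)) ∈ Ico (-1 : ℝ) 1 :=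
    ⟨(p_ge T i).trans h5.1, h5.2.trans_le (rt_le_one T i)⟩
  have h9 := hinv.1 h8
  rw [h7] at h9
  rw [h9]; linarith

/-- Interior points of pieces do not map to `-1` or `0`. -/
lemma image_ne (hBL : T.BilliardLike) {c : ℝ} (hc : c ∈ Ico (-1 : ℝ) 1) (hcP : c ∉ range T.p) :
    T.f c ≠ -1 ∧ T.f c ≠ 0 := by
  obtain ⟨i, h1, h2⟩ := exists_piece T hc
  have hlt : T.p i < c := lt_of_le_of_ne h1 fun e => hcP ⟨i, e⟩
  have h3 := translate' T i ⟨le_rfl, p_lt_rt T i⟩ ⟨h1, h2⟩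
  have h4 := T.bij.mapsTo (p_mem T i)
  refine ⟨by linarith [h4.1], fun h0 => ?_⟩
  have m1 : T.f (T.p i) ∈ T.f '' T.piece i := ⟨_, ⟨le_rfl, p_lt_rt T i⟩, rfl⟩
  have m2 : T.f c ∈ T.f '' T.piece i := ⟨_, ⟨h1, h2⟩, rfl⟩
  rcases hBL.2.2.1 i with h | h
  · have := (h m2).2; linarith
  · have := (h m1).1; linarith

/-- The main combinatorial lemma on finite boundary sets. -/
lemma boundary_orbit (hMK : T.ModifiedKeane) {B : Set ℝ} (hfin : B.Finite)
    (hI : B ⊆ Ico (-1 : ℝ) 1) (h1 : (-1 : ℝ) ∉ B) (h0 : (0 : ℝ) ∉ B)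
    (hB : ∀ c ∈ Ico (-1 : ℝ) 1, c ∉ range T.p → (c ∈ B ↔ T.f c ∈ B)) :
    ∀ b ∈ B, (∀ k, T.f^[k] b ∉ range T.p) ∧ ∃ q, 1 ≤ q ∧ T.f^[q] b = b := by
  have hpt := pt_f T
  have hdisj : ∀ b ∈ B, b ∉ range T.p := by
    rintro b hb ⟨j, rfl⟩
    have hj1 : T.p j ≠ -1 := fun e => h1 (e ▸ hb)
    have hj0 : T.p j ≠ 0 := fun e => h0 (e ▸ hb)
    have hback : ∀ n, ∃ u ∈ B, T.f^[n] u = T.p j := by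
      intro n
      induction n with
      | zero => exact ⟨_, hb, rfl⟩
      | succ n ih =>
        obtain ⟨u, hu, hun⟩ := ih
        obtain ⟨w, hw, rfl⟩ := T.bij.surjOn (hI hu)
        have hwP : w ∉ range T.p := by
          rintro ⟨i, rfl⟩
          exact hMK (n + 1) (by omega) i j hj1 hj0 hun
        exact ⟨w, (hB w hw hwP).2 hu, hun⟩
    choose u hu hun using hback
    obtain ⟨m, _, n, _, hmn, heq⟩ := Set.infinite_univ.exists_lt_map_eq_of_mapsTo
      (f := u) (t := B) (fun n _ => hu n) hfin
    have h3 : T.f^[n - m] (T.p j) = T.p j := by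
      rw [← hun m, heq, ← Function.iterate_add_apply, Nat.sub_add_cancel hmn.le, hun n, ← heq,
        hun m]
    exact hMK (n - m) (by omega) j j hj1 hj0 h3
  have hfwd : ∀ b ∈ B, ∀ k, T.f^[k] b ∈ B := by
    intro b hb k
    induction k with
    | zero => exact hb
    | succ k ih =>
      rw [Function.iterate_succ_apply']
      exact (hB _ (hI ih) (hdisj _ ih)).1 ih
  intro b hb
  refine ⟨fun k => hdisj _ (hfwd b hb k), ?_⟩
  obtain ⟨m, _, n, _, hmn, heq⟩ := Set.infinite_univ.exists_lt_map_eq_of_mapsTo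
      (f := fun k => T.f^[k] b) (t := B) (fun n _ => hfwd b hb n) hfin
  exact ⟨n - m, by omega, iter_cancel hpt hmn.le (hI hb) (hI hb) heq.symm⟩

/-- Boundary of an invariant set. -/
def BB (F : Set ℝ) : Set ℝ :=
  {c | c ∈ Ico (-1 : ℝ) 1 ∧ c ≠ -1 ∧ c ≠ 0 ∧ ¬ ∀ᶠ z in 𝓝[<] c, (z ∈ F ↔ c ∈ F)}

lemma BB_inv (hBL : T.BilliardLike) {F : Set ℝ}
    (hF : ∀ z ∈ Ico (-1 : ℝ) 1, (T.f z ∈ F ↔ z ∈ F)) :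
    ∀ c ∈ Ico (-1 : ℝ) 1, c ∉ range T.p → (c ∈ BB F ↔ T.f c ∈ BB F) := by
  intro c hc hcP
  have hpt := pt_f T
  have hg := germ hpt (neg_one_mem T) hc hcP
  have hc1 : c ≠ -1 := fun e => hcP (e ▸ neg_one_mem T)
  have hc0 : c ≠ 0 := fun e => hcP (e ▸ hBL.1)
  obtain ⟨hf1, hf0⟩ := image_ne T hBL hc hcP
  have hfc := T.bij.mapsTo hc
  have key : (∀ᶠ z in 𝓝[<] c, (z ∈ F ↔ c ∈ F)) ↔ ∀ᶠ z in 𝓝[<] (T.f c), (z ∈ F ↔ T.f c ∈ F) := by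
    constructor
    · intro h
      filter_upwards [(tend_lt (T.f c) c).eventually h,
        (tend_lt (T.f c) c).eventually (nhdsWithin_le_nhds hg)] with z h1 h2
      have h3 : T.f (c + (z - T.f c)) = z := by rw [h2.2]; ring
      have h4 := hF _ h2.1
      rw [h3] at h4
      rw [h4, h1, hF c hc]
    · intro h
      filter_upwards [(tend_lt c (T.f c)).eventually h, nhdsWithin_le_nhds hg] with z h1 h2
      rw [← hF z h2.1, h2.2, h1, hF c hc]
  unfold BB
  simp only [mem_setOf_eq, key]
  tauto

lemma halves {F : Set ℝ} (hBB : BB F = ∅)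
    (hR : ∀ c ∈ Ico (-1 : ℝ) 1, ∀ᶠ z in 𝓝[≥] c, (z ∈ F ↔ c ∈ F)) :
    (∀ u ∈ Ico (-1 : ℝ) 0, ∀ v ∈ Ico (-1 : ℝ) 0, (u ∈ F ↔ v ∈ F)) ∧
    (∀ u ∈ Ico (0 : ℝ) 1, ∀ v ∈ Ico (0 : ℝ) 1, (u ∈ F ↔ v ∈ F)) := by
  have hL : ∀ c ∈ Ico (-1 : ℝ) 1, c ≠ -1 → c ≠ 0 → ∀ᶠ z in 𝓝[<] c, (z ∈ F ↔ c ∈ F) := by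
    intro c hc h1 h0
    by_contra hcon
    have : c ∈ BB F := ⟨hc, h1, h0, hcon⟩
    rw [hBB] at this
    exact this
  constructor
  · refine const_on (fun c hc => hL c ⟨hc.1.le, by linarith [hc.2]⟩ hc.1.ne' hc.2.ne)
      (fun c hc => hR c ⟨hc.1, by linarith [hc.2]⟩)
  · refine const_on (fun c hc => hL c ⟨by linarith [hc.1], hc.2⟩ (by linarith [hc.1]) hc.1.ne')
      (fun c hc => hR c ⟨by linarith [hc.1], hc.2⟩)

lemma no_periodic (hBL : T.BilliardLike) (hMK : T.ModifiedKeane) {x : ℝ}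
    (hx : x ∈ Ico (-1 : ℝ) 1) {q : ℕ} (hq : 1 ≤ q) : T.f^[q] x ≠ x := by
  intro hper
  have hpt := pt_f T
  have hm1 := neg_one_mem T
  set F : Set ℝ := {z | T.f^[q] z = z} with hFdef
  have hF : ∀ z ∈ Ico (-1 : ℝ) 1, (T.f z ∈ F ↔ z ∈ F) := by
    intro z hz
    simp only [hFdef, mem_setOf_eq]
    rw [← Function.iterate_succ_apply, Function.iterate_succ_apply']
    exact T.bij.injOn.eq_iff (iter_mem hpt q hz) hz
  have hloc : ∀ c ∈ Ico (-1 : ℝ) 1, (∀ k < q, T.f^[k] c ∉ range T.p) →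
      ∀ᶠ z in 𝓝[<] c, (z ∈ F ↔ c ∈ F) := by
    intro c hc hk
    filter_upwards [nhdsWithin_le_nhds (germ_iter hpt hm1 hc q hk)] with z hz
    simp only [hFdef, mem_setOf_eq, hz]
    constructor <;> intro h <;> linarith
  have hR : ∀ c ∈ Ico (-1 : ℝ) 1, ∀ᶠ z in 𝓝[≥] c, (z ∈ F ↔ c ∈ F) := by
    intro c hc
    filter_upwards [germ_iter_ge hpt hc q] with z hz
    simp only [hFdef, mem_setOf_eq, hz]
    constructor <;> intro h <;> linarith
  have hfin : (BB F).Finite := by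
    refine (finite_pre hpt q (finite_range T.p)).subset ?_
    rintro c ⟨hc, -, -, hn⟩
    refine ⟨hc, ?_⟩
    by_contra hcon
    push Not at hcon
    exact hn (hloc c hc fun k hk => hcon k hk.le)
  have horb := boundary_orbit T hMK hfin (fun c hc => hc.1) (fun h => h.2.1 rfl)
    (fun h => h.2.2.1 rfl) (BB_inv T hBL hF)
  have hempty : BB F = ∅ := by
    rw [eq_empty_iff_forall_notMem]
    intro c hc
    exact hc.2.2.2 (hloc c hc.1 fun k _ => (horb c hc).1 k)
  obtain ⟨hA, hC⟩ := halves hempty hR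
  have hnp : ∀ j, T.p j ≠ -1 → T.p j ≠ 0 → T.p j ∉ F := fun j h1 h0 h => hMK q hq j j h1 h0 h
  have hpp : ∀ i, T.p i ∈ T.piece i := fun i => ⟨le_rfl, p_lt_rt T i⟩
  rcases lt_or_ge x 0 with hx0 | hx0
  · obtain ⟨i, j, hij, hi, hj⟩ := hBL.2.2.2.1
    have hi' := hi (hpp i)
    have hj' := hj (hpp j)
    by_cases h1 : T.p i = -1
    · have h2 : T.p j ≠ -1 := fun h => hij (T.mono.injective (h1.trans h.symm))
      exact hnp j h2 hj'.2.ne ((hA x ⟨hx.1, hx0⟩ _ hj').1 hper)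
    · exact hnp i h1 hi'.2.ne ((hA x ⟨hx.1, hx0⟩ _ hi').1 hper)
  · obtain ⟨i, j, hij, hi, hj⟩ := hBL.2.2.2.2
    have hi' := hi (hpp i)
    have hj' := hj (hpp j)
    by_cases h1 : T.p i = 0
    · have h2 : T.p j ≠ 0 := fun h => hij (T.mono.injective (h1.trans h.symm))
      exact hnp j (by linarith [hj'.1]) h2 ((hC x ⟨hx0, hx.2⟩ _ hj').1 hper)
    · exact hnp i (by linarith [hi'.1]) h1 ((hC x ⟨hx0, hx.2⟩ _ hi').1 hper)

/-- The half `[-1,0)` is not invariant. -/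
lemma not_inv (hBL : T.BilliardLike) (hIrr : T.Irreducible)
    (h : ∀ z ∈ Ico (-1 : ℝ) 1, (T.f z < 0 ↔ z < 0)) : False := by
  obtain ⟨k, hk⟩ := hBL.1
  have h0 : 0 < T.d := by have := T.two_le; omega
  have hk0 : 0 < (k : ℕ) := by
    rcases Nat.eq_zero_or_pos (k : ℕ) with h' | h'
    · have h2 : k = ⟨0, h0⟩ := Fin.ext h'
      rw [h2, T.first h0] at hk
      norm_num at hk
    · exact h'
  have hU : (⋃ i : Fin T.d, ⋃ (_ : (i : ℕ) < k), T.piece i) = Ico (-1 : ℝ) 0 := by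
    ext c
    simp only [mem_iUnion, exists_prop]
    constructor
    · rintro ⟨i, hik, hc⟩
      rw [piece_eq] at hc
      exact ⟨(p_ge T i).trans hc.1, hc.2.trans_le ((rt_le T hik).trans hk.le)⟩
    · intro hc
      obtain ⟨i, h1, h2⟩ := exists_piece T (c := c) ⟨hc.1, by linarith [hc.2]⟩
      refine ⟨i, ?_, h1, h2⟩
      have : T.p i < T.p k := by rw [hk]; linarith [hc.2]
      exact T.mono.lt_iff_lt.1 this
  apply hIrr k hk0 k.2
  rw [hU]
  ext y
  constructor
  · rintro ⟨z, hz, rfl⟩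
    have hzI : z ∈ Ico (-1 : ℝ) 1 := ⟨hz.1, by linarith [hz.2]⟩
    exact ⟨(T.bij.mapsTo hzI).1, (h z hzI).2 hz.2⟩
  · intro hy
    obtain ⟨z, hz, rfl⟩ := T.bij.surjOn (show y ∈ Ico (-1 : ℝ) 1 from ⟨hy.1, by linarith [hy.2]⟩)
    exact ⟨z, ⟨hz.1, (h z hz).1 hy.2⟩, rfl⟩

lemma hits (hBL : T.BilliardLike) (hIrr : T.Irreducible) (hMK : T.ModifiedKeane) {a b : ℝ}
    (ha : -1 ≤ a) (hab : a < b) (hb : b ≤ 1) {x : ℝ} (hx : x ∈ Ico (-1 : ℝ) 1) :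
    ∃ n, T.f^[n] x ∈ Ico a b := by
  classical
  have hpt := pt_f T
  have hm1 := neg_one_mem T
  have hJ : ∀ x ∈ Ico a b, x ∈ Ico (-1 : ℝ) 1 := fun x hx => ⟨ha.trans hx.1, hx.2.trans_le hb⟩
  obtain ⟨N₁, hN₁⟩ := return_bound hpt ha hb
  obtain ⟨N, hN⟩ := return_bound (pt_inv T) ha hb
  have hinv := T.bij.invOn_invFunOn
  set g := Function.invFunOn T.f (Ico (-1 : ℝ) 1) with hg
  have hfg : ∀ n, ∀ j ∈ Ico (-1 : ℝ) 1, T.f^[n] (g^[n] j) = j := by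
    intro n
    induction n with
    | zero => intro j _; rfl
    | succ n ih =>
      intro j hj
      rw [Function.iterate_succ_apply, Function.iterate_succ_apply',
        hinv.2 (iter_mem (pt_inv T) n hj)]
      exact ih j hj
  have hbound : ∀ z ∈ Ico (-1 : ℝ) 1, (∃ n, T.f^[n] z ∈ Ico a b) →
      ∃ n ≤ N, T.f^[n] z ∈ Ico a b := by
    intro z hz hex
    refine ⟨Nat.find hex, ?_, Nat.find_spec hex⟩
    have hm := Nat.find_spec hex
    set m := Nat.find hex with hmdef
    obtain ⟨n, hn1, hnN, hn⟩ := hN _ hm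
    by_contra hcon
    have hnm : n ≤ m := by omega
    have h1 := iter_cancel hpt hnm hz (hJ _ hn) (hfg n _ (hJ _ hm)).symm
    exact Nat.find_min hex (m := m - n) (by omega) (h1 ▸ hn)
  set F : Set ℝ := {z | ∃ n, T.f^[n] z ∈ Ico a b} with hFdef
  have hF : ∀ z ∈ Ico (-1 : ℝ) 1, (T.f z ∈ F ↔ z ∈ F) := by
    intro z hz
    constructor
    · rintro ⟨n, hn⟩
      exact ⟨n + 1, hn⟩
    · rintro ⟨n, hn⟩
      rcases n with _ | n
      · obtain ⟨m, hm1, -, hm⟩ := hN₁ z hn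
        refine ⟨m - 1, ?_⟩
        rw [← Function.iterate_succ_apply, Nat.succ_eq_add_one, Nat.sub_add_cancel hm1]
        exact hm
      · exact ⟨n, hn⟩
  have hFiff : ∀ c ∈ Ico (-1 : ℝ) 1, ∀ z ∈ Ico (-1 : ℝ) 1,
      (∀ n ∈ Finset.range (N + 1), (T.f^[n] z ∈ Ico a b ↔ T.f^[n] c ∈ Ico a b)) →
      (z ∈ F ↔ c ∈ F) := by
    intro c hc z hz h
    constructor
    · intro h'
      obtain ⟨n, hn, hn'⟩ := hbound z hz h'
      exact ⟨n, (h n (Finset.mem_range.2 (by omega))).1 hn'⟩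
    · intro h'
      obtain ⟨n, hn, hn'⟩ := hbound c hc h'
      exact ⟨n, (h n (Finset.mem_range.2 (by omega))).2 hn'⟩
  have hR : ∀ c ∈ Ico (-1 : ℝ) 1, ∀ᶠ z in 𝓝[≥] c, (z ∈ F ↔ c ∈ F) := by
    intro c hc
    have h1 : ∀ᶠ z in 𝓝[≥] c, ∀ n ∈ Finset.range (N + 1),
        (T.f^[n] z ∈ Ico a b ↔ T.f^[n] c ∈ Ico a b) := by
      rw [Filter.eventually_all_finset]
      intro n _
      have h2 : ∀ᶠ y in 𝓝[≥] (T.f^[n] c), (y ∈ Ico a b ↔ T.f^[n] c ∈ Ico a b) := by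
        set y0 := T.f^[n] c
        rcases lt_or_ge y0 a with h | h
        · filter_upwards [nhdsWithin_le_nhds (eventually_lt_nhds h)] with y hy
          exact ⟨fun h' => absurd h'.1 (not_le.2 hy), fun h' => absurd h'.1 (not_le.2 h)⟩
        · rcases lt_or_ge y0 b with h' | h'
          · filter_upwards [nhdsWithin_le_nhds (eventually_lt_nhds h'),
              eventually_mem_nhdsWithin] with y hy hy'
            exact ⟨fun _ => ⟨h, h'⟩, fun _ => ⟨h.trans hy', hy⟩⟩
          · filter_upwards [eventually_mem_nhdsWithin] with y hy
            exact ⟨fun h'' => absurd h''.2 (not_lt.2 (h'.trans hy)),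
              fun h'' => absurd h''.2 (not_lt.2 h')⟩
      filter_upwards [germ_iter_ge hpt hc n, (tend_ge c (T.f^[n] c)).eventually h2] with z h3 h4
      rw [h3]; exact h4
    filter_upwards [h1, germ_ge hpt hc] with z hz hz'
    exact hFiff c hc z hz'.1 hz
  have hfin : (BB F).Finite := by
    refine (finite_pre hpt N (S := range T.p ∪ {a, b})
      ((finite_range T.p).union (by simp))).subset ?_
    rintro c ⟨hc, -, -, hn⟩
    refine ⟨hc, ?_⟩
    by_contra hcon
    push Not at hcon
    apply hn
    have hcP : ∀ k ≤ N, T.f^[k] c ∉ range T.p := fun k hk h => hcon k hk (Or.inl h)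
    have hca : ∀ k ≤ N, T.f^[k] c ≠ a := fun k hk h => hcon k hk (Or.inr (by simp [h]))
    have hcb : ∀ k ≤ N, T.f^[k] c ≠ b := fun k hk h => hcon k hk (Or.inr (by simp [h]))
    have h1 : ∀ᶠ z in 𝓝 c, ∀ n ∈ Finset.range (N + 1),
        (T.f^[n] z ∈ Ico a b ↔ T.f^[n] c ∈ Ico a b) := by
      rw [Filter.eventually_all_finset]
      intro n hn
      have hnN : n ≤ N := by have := Finset.mem_range.1 hn; omega
      have h2 : ∀ᶠ y in 𝓝 (T.f^[n] c), (y ∈ Ico a b ↔ T.f^[n] c ∈ Ico a b) := by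
        have hya := hca n hnN
        have hyb := hcb n hnN
        set y0 := T.f^[n] c
        rcases lt_or_gt_of_ne hya with h | h
        · filter_upwards [eventually_lt_nhds h] with y hy
          exact ⟨fun h' => absurd h'.1 (not_le.2 hy), fun h' => absurd h'.1 (not_le.2 h)⟩
        · rcases lt_or_gt_of_ne hyb with h' | h'
          · filter_upwards [eventually_lt_nhds h', eventually_gt_nhds h] with y hy hy'
            exact ⟨fun _ => ⟨h.le, h'⟩, fun _ => ⟨le_of_lt hy', hy⟩⟩
          · filter_upwards [eventually_gt_nhds h'] with y hy
            exact ⟨fun h'' => absurd h''.2 (not_lt.2 (le_of_lt hy)),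
              fun h'' => absurd h''.2 (not_lt.2 h'.le)⟩
      filter_upwards [germ_iter hpt hm1 hc n fun k hk => hcP k (by omega),
        (tend_nhds c (T.f^[n] c)).eventually h2] with z h3 h4
      rw [h3]; exact h4
    filter_upwards [nhdsWithin_le_nhds h1,
      nhdsWithin_le_nhds (germ hpt hm1 hc (hcP 0 (by omega)))] with z hz hz'
    exact hFiff c hc z hz'.1 hz
  have horb := boundary_orbit T hMK hfin (fun c hc => hc.1) (fun h => h.2.1 rfl)
    (fun h => h.2.2.1 rfl) (BB_inv T hBL hF)
  have hempty : BB F = ∅ := by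
    rw [eq_empty_iff_forall_notMem]
    intro c hc
    obtain ⟨-, q, hq, hqc⟩ := horb c hc
    exact no_periodic T hBL hMK hc.1 hq hqc
  obtain ⟨hA, hC⟩ := halves hempty hR
  have haF : a ∈ F := ⟨0, le_rfl, hab⟩
  have hm : (-1 : ℝ) ∈ Ico (-1 : ℝ) 0 := by norm_num
  have hz : (0 : ℝ) ∈ Ico (0 : ℝ) 1 := by norm_num
  have hA' : ∀ z ∈ Ico (-1 : ℝ) 1, z < 0 → (z ∈ F ↔ (-1 : ℝ) ∈ F) :=
    fun z hz h => hA z ⟨hz.1, h⟩ _ hm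
  have hC' : ∀ z ∈ Ico (-1 : ℝ) 1, 0 ≤ z → (z ∈ F ↔ (0 : ℝ) ∈ F) :=
    fun z hz' h => hC z ⟨h, hz'.2⟩ _ hz
  by_cases h1 : (-1 : ℝ) ∈ F <;> by_cases h0 : (0 : ℝ) ∈ F
  · rcases lt_or_ge x 0 with h | h
    · exact (hA' x hx h).2 h1
    · exact (hC' x hx h).2 h0
  · exfalso
    have hiff : ∀ z ∈ Ico (-1 : ℝ) 1, (z < 0 ↔ z ∈ F) := fun z hz' =>
      ⟨fun h => (hA' z hz' h).2 h1, fun h => by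
        by_contra hcon
        exact h0 ((hC' z hz' (not_lt.1 hcon)).1 h)⟩
    refine not_inv T hBL hIrr fun z hz' => ?_
    rw [hiff _ (T.bij.mapsTo hz'), hiff z hz', hF z hz']
  · exfalso
    have hiff : ∀ z ∈ Ico (-1 : ℝ) 1, (z < 0 ↔ z ∉ F) := fun z hz' =>
      ⟨fun h h' => h1 ((hA' z hz' h).1 h'), fun h => by
        by_contra hcon
        exact h ((hC' z hz' (not_lt.1 hcon)).2 h0)⟩
    refine not_inv T hBL hIrr fun z hz' => ?_
    rw [hiff _ (T.bij.mapsTo hz'), hiff z hz', hF z hz']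
  · exfalso
    have haI := hJ a ⟨le_rfl, hab⟩
    rcases lt_or_ge a 0 with h | h
    · exact h1 ((hA' a haI h).1 haF)
    · exact h0 ((hC' a haI h).1 haF)

end IETProof

theorem irreducible_modifiedKeane_minimal
    (T : IntervalExchange) (hBL : T.BilliardLike) (hIrr : T.Irreducible)
    (hMK : T.ModifiedKeane) :
    ∀ x ∈ Set.Ico (-1 : ℝ) 1, ∀ y ∈ Set.Ico (-1 : ℝ) 1, ∀ ε : ℝ, 0 < ε →
      ∃ n : ℕ, |T.f^[n] x - y| < ε := by
  intro x hx y hy ε hε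
  obtain ⟨n, hn⟩ := IETProof.hits T hBL hIrr hMK (a := y) (b := min (y + ε) 1) hy.1
    (lt_min (by linarith) hy.2) (min_le_right _ _) hx
  refine ⟨n, ?_⟩
  have h1 := hn.1
  have h2 := lt_of_lt_of_le hn.2 (min_le_left _ _)
  rw [abs_lt]
  constructor <;> linarith
end

section
/- Let r₁ = 5/11 + 1/(22π) and r₂ = 5/11 − 1/(220π), and let f = f_{r₁,r₂} be the associated eight-interval exchange transformation of [−1, 1). Then f is minimal: for every x ∈ [−1, 1), the forward orbit {f^n(x) : n ≥ 0} is dense in [−1, 1). In particular f has no periodic points. -/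
/-- The eight-interval exchange transformation of `[−1, 1)` associated with the rotation
numbers `r₁`, `r₂` (case `1/4 + r₂/2 − r₁ > 0`), encoding the billiard dynamics in a
domain bounded by two confocal ellipses and two segments on their smaller axis. -/
noncomputable def fIET (r1 r2 : ℝ) (ξ : ℝ) : ℝ :=
  if ξ < r1 - r2 - 1 then ξ + r1 + 3 / 2
  else if ξ < r1 - r2 - 1 / 2 then ξ + r2
  else if ξ < -r1 then ξ + r1
  else if ξ < 0 then ξ + r1 - 1
  else if ξ < r1 - r2 then ξ + r1 - 1 / 2
  else if ξ < r1 - r2 + 1 / 2 then ξ + r2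
  else if ξ < 1 - r1 then ξ + r1
  else ξ + r1 - 1

/-- Abstract properties of a piecewise translation of `[-1,1)` used in the Keane argument. -/
structure KSys (f : ℝ → ℝ) (D : Set ℝ) : Prop where
  maps : ∀ x ∈ Set.Ico (-1 : ℝ) 1, f x ∈ Set.Ico (-1 : ℝ) 1
  inj : Set.InjOn f (Set.Ico (-1 : ℝ) 1)
  surj : ∀ y ∈ Set.Ico (-1 : ℝ) 1, ∃ x ∈ Set.Ico (-1 : ℝ) 1, f x = y
  fin : D.Finite
  neg_one : (-1 : ℝ) ∈ D
  trans : ∀ w ∈ Set.Ico (-1 : ℝ) 1, ∀ w' ∈ Set.Ico (-1 : ℝ) 1, w ≤ w' →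
    (∀ d ∈ D, ¬ (w < d ∧ d ≤ w')) → f w' = f w + (w' - w)
  nonper : ∀ x ∈ Set.Ico (-1 : ℝ) 1, ∀ n : ℕ, 1 ≤ n → f^[n] x ≠ x

namespace KSys

variable {f : ℝ → ℝ} {D : Set ℝ}

lemma iter_maps (h : KSys f D) (n : ℕ) : ∀ x ∈ Set.Ico (-1 : ℝ) 1,
    f^[n] x ∈ Set.Ico (-1 : ℝ) 1 := by
  induction n with
  | zero => intro x hx; simpa using hx
  | succ k ih => intro x hx; rw [Function.iterate_succ_apply]; exact ih _ (h.maps x hx)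

lemma iter_inj (h : KSys f D) (n : ℕ) : ∀ x ∈ Set.Ico (-1 : ℝ) 1, ∀ y ∈ Set.Ico (-1 : ℝ) 1,
    f^[n] x = f^[n] y → x = y := by
  induction n with
  | zero => intro x _ y _ e; simpa using e
  | succ k ih =>
    intro x hx y hy e
    rw [Function.iterate_succ_apply, Function.iterate_succ_apply] at e
    exact h.inj hx hy (ih _ (h.maps x hx) _ (h.maps y hy) e)

/-- A finite set leaves a gap to the right of each point. -/
lemma gap {C : Set ℝ} (hC : C.Finite) {z b : ℝ} (hzb : z < b) :
    ∃ z', z < z' ∧ z' < b ∧ ∀ c ∈ C, ¬ (z < c ∧ c ≤ z') := by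
  have h1 : ∀ᶠ z' in nhdsWithin z (Set.Ioi z), ∀ c ∈ C, ¬ (z < c ∧ c ≤ z') := by
    rw [Filter.eventually_all_finite hC]
    intro c _
    by_cases hc : z < c
    · filter_upwards [Ioo_mem_nhdsGT hc] with x hx
      rintro ⟨_, h2⟩
      exact absurd hx.2 (not_lt.mpr h2)
    · exact Filter.Eventually.of_forall (fun x hx => hc hx.1)
  obtain ⟨z', h2, h3⟩ := (h1.and (Ioo_mem_nhdsGT hzb)).exists
  exact ⟨z', h3.1, h3.2, h2⟩

/-- The cut points of `[a,b)`. -/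
def cuts (f : ℝ → ℝ) (D : Set ℝ) (a b : ℝ) : Set ℝ :=
  ((D ∪ {a, b}) ∩ Set.Ico a b) ∪
  {z | z ∈ Set.Ico a b ∧ ∃ n, 1 ≤ n ∧ f^[n] z ∈ D ∪ {a, b} ∧
    ∀ j, 0 < j → j < n → f^[j] z ∉ Set.Ico a b}

lemma cuts_finite (h : KSys f D) {a b : ℝ} (ha : -1 ≤ a) (hb : b ≤ 1) :
    (cuts f D a b).Finite := by
  have hX : ∀ z ∈ Set.Ico a b, z ∈ Set.Ico (-1 : ℝ) 1 :=
    fun z hz => ⟨ha.trans hz.1, hz.2.trans_le hb⟩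
  have hD' : (D ∪ {a, b}).Finite := h.fin.union (by simp)
  refine (hD'.inter_of_left _).union ?_
  have hsub : {z | z ∈ Set.Ico a b ∧ ∃ n, 1 ≤ n ∧ f^[n] z ∈ D ∪ {a, b} ∧
      ∀ j, 0 < j → j < n → f^[j] z ∉ Set.Ico a b} ⊆
      ⋃ e ∈ D ∪ {a, b}, {z | z ∈ Set.Ico a b ∧ ∃ n, 1 ≤ n ∧ f^[n] z = e ∧
      ∀ j, 0 < j → j < n → f^[j] z ∉ Set.Ico a b} := by
    rintro z ⟨hz, n, hn, he, hj⟩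
    simp only [Set.mem_iUnion]
    exact ⟨_, he, hz, n, hn, rfl, hj⟩
  refine Set.Finite.subset (hD'.biUnion fun e _ => Set.Subsingleton.finite ?_) hsub
  have key : ∀ z z' n m, z ∈ Set.Ico a b → z' ∈ Set.Ico a b → 1 ≤ n → n ≤ m →
      f^[n] z = f^[m] z' → (∀ j, 0 < j → j < m → f^[j] z' ∉ Set.Ico a b) → z = z' := by
    intro z z' n m hz hz' hn hnm e hj
    obtain ⟨k, rfl⟩ := Nat.exists_eq_add_of_le hnm
    rw [Function.iterate_add_apply] at e
    have e2 := h.iter_inj n _ (hX z hz) _ (h.iter_maps k _ (hX z' hz')) e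
    rcases Nat.eq_zero_or_pos k with rfl | hk
    · simpa using e2
    · exact absurd (e2 ▸ hz) (hj k hk (by omega))
  rintro z ⟨hz, n, hn, he, hj⟩ z' ⟨hz', m, hm, he', hj'⟩
  rcases le_total n m with hnm | hnm
  · exact key z z' n m hz hz' hn hnm (he.trans he'.symm) hj'
  · exact (key z' z m n hz' hz hm hnm (he'.trans he.symm) hj).symm

lemma free_trans (h : KSys f D) {a b : ℝ} (ha : -1 ≤ a) (hb : b ≤ 1) {z z' : ℝ}
    (hz : z ∈ Set.Ico a b) (hz' : z' ∈ Set.Ico a b)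
    (hc : ∀ c ∈ cuts f D a b, ¬ (z < c ∧ c ≤ z')) (n : ℕ)
    (hfree : ∀ j, 0 < j → j ≤ n → f^[j] z ∉ Set.Ico a b) :
    ∀ w ∈ Set.Icc z z', f^[n + 1] w = f^[n + 1] z + (w - z) ∧
      ∀ j, 0 < j → j ≤ n → f^[j] w ∉ Set.Ico a b := by
  have hX : ∀ z ∈ Set.Ico a b, z ∈ Set.Ico (-1 : ℝ) 1 :=
    fun z hz => ⟨ha.trans hz.1, hz.2.trans_le hb⟩
  have hJ : ∀ w ∈ Set.Icc z z', w ∈ Set.Ico a b :=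
    fun w hw => ⟨hz.1.trans hw.1, hw.2.trans_lt hz'.2⟩
  induction n with
  | zero =>
    intro w hw
    refine ⟨?_, fun j h1 h2 => by omega⟩
    simp only [zero_add, Function.iterate_one]
    apply h.trans _ (hX z hz) _ (hX w (hJ w hw)) hw.1
    rintro d hd ⟨h1, h2⟩
    exact hc d (Or.inl ⟨Or.inl hd, hz.1.trans h1.le, h2.trans_lt (hJ w hw).2⟩)
      ⟨h1, h2.trans hw.2⟩
  | succ n ih =>
    have ih' := ih (fun j h1 h2 => hfree j h1 (by omega))
    have hnz := hfree (n + 1) (by omega) le_rfl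
    -- no marked point is met inside
    have hno : ∀ w ∈ Set.Icc z z', ∀ e ∈ D ∪ {a, b},
        ¬ (f^[n + 1] z < e ∧ e ≤ f^[n + 1] w) := by
      rintro w hw e he ⟨h1, h2⟩
      have hw1 := (ih' w hw).1
      have hmem : z + (e - f^[n + 1] z) ∈ Set.Icc z z' := by
        constructor
        · linarith
        · linarith [hw.2]
      have h3 := ih' _ hmem
      have h4 : f^[n + 1] (z + (e - f^[n + 1] z)) = e := by rw [h3.1]; ring
      refine hc (z + (e - f^[n + 1] z)) (Or.inr ⟨hJ _ hmem, n + 1, by omega, ?_, ?_⟩)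
        ⟨by linarith, hmem.2⟩
      · rw [h4]; exact he
      · intro j hj1 hj2
        exact h3.2 j hj1 (by omega)
    intro w hw
    have hw1 := (ih' w hw).1
    constructor
    · rw [Function.iterate_succ_apply' f (n + 1) w, Function.iterate_succ_apply' f (n + 1) z]
      rw [h.trans _ (h.iter_maps (n + 1) z (hX z hz)) _
        (h.iter_maps (n + 1) w (hX w (hJ w hw))) (by linarith [hw.1])
        (fun d hd => hno w hw d (Or.inl hd))]
      rw [hw1]; ring
    · intro j hj1 hj2
      rcases Nat.lt_or_ge j (n + 1) with h5 | h5
      · exact (ih' w hw).2 j hj1 (by omega)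
      · have : j = n + 1 := by omega
        subst this
        intro hin
        apply hno w hw a (by simp)
        refine ⟨?_, hin.1⟩
        by_contra hcon
        apply hnz
        refine ⟨not_lt.mp hcon, ?_⟩
        linarith [hin.2, hw.1]

lemma recur (h : KSys f D) {a b : ℝ} (ha : -1 ≤ a) (hb : b ≤ 1) {z : ℝ}
    (hz : z ∈ Set.Ico a b) : ∃ n, 1 ≤ n ∧ f^[n] z ∈ Set.Ico a b := by
  have hX : ∀ z ∈ Set.Ico a b, z ∈ Set.Ico (-1 : ℝ) 1 :=
    fun z hz => ⟨ha.trans hz.1, hz.2.trans_le hb⟩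
  by_contra hcon
  push Not at hcon
  obtain ⟨z', h1, h2, h3⟩ := gap (h.cuts_finite ha hb) hz.2
  have hz' : z' ∈ Set.Ico a b := ⟨hz.1.trans h1.le, h2⟩
  have htr : ∀ n, ∀ w ∈ Set.Icc z z', f^[n] w = f^[n] z + (w - z) := by
    intro n w hw
    cases n with
    | zero => simp
    | succ n => exact (h.free_trans ha hb hz hz' h3 n (fun j hj _ => hcon j hj) w hw).1
  have hfr : ∀ n, 1 ≤ n → ∀ w ∈ Set.Icc z z', f^[n] w ∉ Set.Ico a b := by
    intro n hn w hw
    exact (h.free_trans ha hb hz hz' h3 n (fun j hj _ => hcon j hj) w hw).2 n hn le_rfl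
  have main : ∀ n m, n ≠ m → f^[n] z ≤ f^[m] z → f^[m] z - f^[n] z < z' - z → False := by
    intro n m hnm hle hlt
    have hmem : z + (f^[m] z - f^[n] z) ∈ Set.Icc z z' := ⟨by linarith, by linarith⟩
    have hmJ : z + (f^[m] z - f^[n] z) ∈ Set.Ico a b :=
      ⟨hz.1.trans hmem.1, hmem.2.trans_lt h2⟩
    have e : f^[n] (z + (f^[m] z - f^[n] z)) = f^[m] z := by rw [htr n _ hmem]; ring
    rcases Nat.lt_or_gt_of_ne hnm with hl | hl
    · obtain ⟨k, rfl⟩ := Nat.exists_eq_add_of_le hl.le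
      rw [Function.iterate_add_apply f n k] at e
      have e2 := h.iter_inj n _ (hX _ (by rw [← Function.iterate_add_apply]; exact hmJ)) _
        (h.iter_maps k _ (hX z hz)) e
      apply hcon k (by omega)
      rw [← e2, ← Function.iterate_add_apply]
      exact hmJ
    · obtain ⟨k, rfl⟩ := Nat.exists_eq_add_of_le hl.le
      rw [Function.iterate_add_apply f m k] at e
      have e2 := h.iter_inj m _ (h.iter_maps k _ (hX _ hmJ)) _ (hX z hz) e
      exact hfr k (by omega) _ hmem (by rw [e2]; exact hz)
  obtain ⟨l, _, φ, hφ, hlim⟩ := (isCompact_Icc (a := (-1 : ℝ)) (b := 1)).tendsto_subseq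
    (x := fun n => f^[n] z) (fun n => ⟨(h.iter_maps n z (hX z hz)).1,
      (h.iter_maps n z (hX z hz)).2.le⟩)
  rw [Metric.tendsto_atTop] at hlim
  obtain ⟨N, hN⟩ := hlim ((z' - z) / 2) (by linarith)
  have q1 := hN N le_rfl
  have q2 := hN (N + 1) (by omega)
  rw [Real.dist_eq, abs_lt] at q1 q2
  simp only [Function.comp] at q1 q2
  have hne : φ N ≠ φ (N + 1) := (hφ (Nat.lt_succ_self N)).ne
  rcases le_total (f^[φ N] z) (f^[φ (N + 1)] z) with hl | hl
  · exact main _ _ hne hl (by linarith [q1.1, q2.2])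
  · exact main _ _ hne.symm hl (by linarith [q1.2, q2.1])

lemma bounded_return (h : KSys f D) {a b : ℝ} (ha : -1 ≤ a) (hb : b ≤ 1) :
    ∃ N, ∀ z ∈ Set.Ico a b, ∃ n, 1 ≤ n ∧ n ≤ N ∧ f^[n] z ∈ Set.Ico a b := by
  classical
  have hX : ∀ z ∈ Set.Ico a b, z ∈ Set.Ico (-1 : ℝ) 1 :=
    fun z hz => ⟨ha.trans hz.1, hz.2.trans_le hb⟩
  have hC := h.cuts_finite ha hb
  have hr : ∀ c, ∃ n, c ∈ Set.Ico a b → (1 ≤ n ∧ f^[n] c ∈ Set.Ico a b ∧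
      ∀ j, 0 < j → j < n → f^[j] c ∉ Set.Ico a b) := by
    intro c
    by_cases hc : c ∈ Set.Ico a b
    · have hex := h.recur ha hb hc
      refine ⟨Nat.find hex, fun _ => ⟨(Nat.find_spec hex).1, (Nat.find_spec hex).2, ?_⟩⟩
      intro j hj1 hj2 hj3
      exact Nat.find_min hex hj2 ⟨hj1, hj3⟩
    · exact ⟨0, fun h => absurd h hc⟩
  choose r hr using hr
  refine ⟨hC.toFinset.sup r, ?_⟩
  intro z hz
  -- the largest cut below z
  have hne : (hC.toFinset.filter (fun c => c ≤ z)).Nonempty := by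
    refine ⟨a, ?_⟩
    simp only [Finset.mem_filter, Set.Finite.mem_toFinset]
    exact ⟨Or.inl ⟨by simp, le_rfl, hz.1.trans_lt hz.2⟩, hz.1⟩
  obtain ⟨c, hcm, hcmax⟩ := Finset.exists_max_image _ (fun c => c) hne
  simp only [Finset.mem_filter, Set.Finite.mem_toFinset] at hcm hcmax
  have hcJ : c ∈ Set.Ico a b := by
    rcases hcm.1 with h1 | h1
    · exact h1.2
    · exact h1.1
  obtain ⟨r1, r2, r3⟩ := hr c hcJ
  refine ⟨r c, r1, Finset.le_sup (f := r) (by simpa using hcm.1), ?_⟩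
  have hno : ∀ c' ∈ cuts f D a b, ¬ (c < c' ∧ c' ≤ z) := by
    rintro c' h1 ⟨h2, h3⟩
    exact absurd (hcmax c' ⟨h1, h3⟩) (not_le.mpr h2)
  have hft := h.free_trans ha hb hcJ hz hno (r c - 1) (fun j h1 h2 => r3 j h1 (by omega))
  rw [Nat.sub_add_cancel r1] at hft
  have hzt := (hft z ⟨hcm.2, le_rfl⟩).1
  refine ⟨by linarith [r2.1, hcm.2], ?_⟩
  by_contra hcon
  rw [not_lt] at hcon
  have hmem : c + (b - f^[r c] c) ∈ Set.Icc c z :=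
    ⟨by linarith [r2.2], by linarith⟩
  have h5 := hft _ hmem
  refine hno (c + (b - f^[r c] c)) (Or.inr ⟨⟨hcJ.1.trans hmem.1, hmem.2.trans_lt hz.2⟩,
    r c, r1, ?_, ?_⟩) ⟨by linarith [r2.2], hmem.2⟩
  · rw [h5.1]
    have : f^[r c] c + (c + (b - f^[r c] c) - c) = b := by ring
    rw [this]; simp
  · intro j h1 h2
    exact h5.2 j h1 (by omega)

/-- `S` changes membership only at points of `F`. -/
def Tame (S F : Set ℝ) : Prop :=
  ∀ w ∈ Set.Ico (-1 : ℝ) 1, ∀ w' ∈ Set.Ico (-1 : ℝ) 1, w ≤ w' →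
    (∀ e ∈ F, ¬ (w < e ∧ e ≤ w')) → (w ∈ S ↔ w' ∈ S)

lemma tame_Ico (a b : ℝ) : Tame (Set.Ico a b) {a, b} := by
  intro w _ w' _ hle hno
  have h1 := hno a (by simp)
  have h2 := hno b (by simp)
  simp only [Set.mem_Ico]
  constructor
  · rintro ⟨h3, h4⟩
    refine ⟨h3.trans hle, ?_⟩
    by_contra hc
    exact h2 ⟨h4, not_lt.mp hc⟩
  · rintro ⟨h3, h4⟩
    refine ⟨?_, hle.trans_lt h4⟩
    by_contra hc
    exact h1 ⟨not_le.mp hc, h3⟩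

lemma tame_pre (h : KSys f D) {S F : Set ℝ} (hF : F.Finite) (hS : Tame S F) :
    ∃ F' : Set ℝ, F'.Finite ∧ Tame {x | f x ∈ S} F' := by
  refine ⟨D ∪ (Set.Ico (-1 : ℝ) 1 ∩ Set.preimage f F), ?_, ?_⟩
  · refine h.fin.union ?_
    refine Set.Finite.of_injOn (f := f) (t := F) (fun x hx => hx.2)
      (h.inj.mono Set.inter_subset_left) hF
  · intro w hw w' hw' hle hno
    have ht : ∀ u ∈ Set.Icc w w', f u = f w + (u - w) := by
      intro u hu
      apply h.trans w hw u ⟨hw.1.trans hu.1, hu.2.trans_lt hw'.2⟩ hu.1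
      rintro d hd ⟨h1, h2⟩
      exact hno d (Or.inl hd) ⟨h1, h2.trans hu.2⟩
    have htw := ht w' ⟨hle, le_rfl⟩
    apply hS _ (h.maps w hw) _ (h.maps w' hw') (by linarith)
    rintro e he ⟨h1, h2⟩
    have hmem : w + (e - f w) ∈ Set.Icc w w' := ⟨by linarith, by linarith⟩
    refine hno (w + (e - f w)) (Or.inr ⟨⟨hw.1.trans hmem.1, hmem.2.trans_lt hw'.2⟩, ?_⟩)
      ⟨by linarith, hmem.2⟩
    have : f (w + (e - f w)) = e := by rw [ht _ hmem]; ring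
    simpa [this] using he

lemma tame_iter (h : KSys f D) (a b : ℝ) (k : ℕ) :
    ∃ F' : Set ℝ, F'.Finite ∧ Tame {x | f^[k] x ∈ Set.Ico a b} F' := by
  induction k with
  | zero => exact ⟨{a, b}, by simp, tame_Ico a b⟩
  | succ k ih =>
    obtain ⟨F, h1, h2⟩ := ih
    obtain ⟨F', h3, h4⟩ := h.tame_pre h1 h2
    refine ⟨F', h3, ?_⟩
    simpa [Function.iterate_succ_apply] using h4

lemma tame_V (h : KSys f D) (a b : ℝ) (N : ℕ) :
    ∃ F' : Set ℝ, F'.Finite ∧ Tame {x | ∃ k < N, f^[k] x ∈ Set.Ico a b} F' := by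
  choose F h1 h2 using h.tame_iter a b
  refine ⟨⋃ k ∈ Set.Iio N, F k, (Set.finite_Iio N).biUnion (fun k _ => h1 k), ?_⟩
  intro w hw w' hw' hle hno
  have hk : ∀ k < N, (f^[k] w ∈ Set.Ico a b ↔ f^[k] w' ∈ Set.Ico a b) := by
    intro k hk
    apply h2 k w hw w' hw' hle
    intro e he
    apply hno
    simp only [Set.mem_iUnion]
    exact ⟨k, hk, he⟩
  constructor
  · rintro ⟨k, h3, h4⟩; exact ⟨k, h3, (hk k h3).1 h4⟩
  · rintro ⟨k, h3, h4⟩; exact ⟨k, h3, (hk k h3).2 h4⟩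

/-- Points at which membership in `V` jumps (from the left). -/
def Jump (V : Set ℝ) : Set ℝ :=
  {p | p ∈ Set.Ico (-1 : ℝ) 1 ∧ -1 < p ∧
    ∀ η > 0, ∃ w ∈ Set.Ico (-1 : ℝ) 1, p - η < w ∧ w < p ∧ ¬ (w ∈ V ↔ p ∈ V)}

lemma gap_left {C : Set ℝ} (hC : C.Finite) {p : ℝ} (hp : -1 < p) :
    ∃ η > 0, -1 < p - η ∧ ∀ c ∈ C, c ≠ p → ¬ (p - η < c ∧ c ≤ p) := by
  obtain ⟨z', h1, h2, h3⟩ := gap (C := Set.image (fun x => -x) C) (hC.image _)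
    (z := -p) (b := 1) (by linarith)
  refine ⟨(p + z') / 2, by linarith, by linarith, ?_⟩
  rintro c hc hne ⟨h4, h5⟩
  exact h3 (-c) ⟨c, hc, rfl⟩ ⟨by have := lt_of_le_of_ne h5 hne; linarith, by linarith⟩

/-- Non-jump points can be removed from the finite set. -/
lemma tame_jump {V F : Set ℝ} (hF : F.Finite) (hV : Tame V F) : Tame V (Jump V) := by
  have key : ∀ n : ℕ, ∀ w ∈ Set.Ico (-1 : ℝ) 1, ∀ w' ∈ Set.Ico (-1 : ℝ) 1, w ≤ w' →
      (F ∩ Set.Ioc w w').ncard ≤ n → (∀ e ∈ Jump V, ¬ (w < e ∧ e ≤ w')) →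
      (w ∈ V ↔ w' ∈ V) := by
    intro n
    induction n with
    | zero =>
      intro w hw w' hw' hle hcard _
      apply hV w hw w' hw' hle
      intro e he hee
      have hfin : (F ∩ Set.Ioc w w').Finite := hF.inter_of_left _
      have : F ∩ Set.Ioc w w' = ∅ := (Set.ncard_eq_zero hfin).1 (by omega)
      have h2 : e ∈ F ∩ Set.Ioc w w' := ⟨he, hee⟩
      rw [this] at h2
      exact h2
    | succ n ih =>
      intro w hw w' hw' hle hcard hno
      by_cases hex : ∃ e ∈ F, w < e ∧ e ≤ w'
      · obtain ⟨e, he, he1, he2⟩ := hex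
        have heX : e ∈ Set.Ico (-1 : ℝ) 1 := ⟨hw.1.trans he1.le, he2.trans_lt hw'.2⟩
        have hfin : (F ∩ Set.Ioc w w').Finite := hF.inter_of_left _
        have heJ : e ∉ Jump V := fun hj => hno e hj ⟨he1, he2⟩
        have hlt : -1 < e := lt_of_le_of_lt hw.1 he1
        have hη : ∃ η > 0, ∀ u ∈ Set.Ico (-1 : ℝ) 1, e - η < u → u < e → (u ∈ V ↔ e ∈ V) := by
          by_contra hcon
          push Not at hcon
          apply heJ
          refine ⟨heX, hlt, ?_⟩
          intro η hη
          obtain ⟨u, h1, h2, h3, h4⟩ := hcon η hη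
          refine ⟨u, h1, h2, h3, ?_⟩
          tauto
        obtain ⟨η, hη, hu⟩ := hη
        obtain ⟨u, hu1, hu2⟩ := exists_between (max_lt he1 (sub_lt_self e hη))
        have hwu : w < u := (le_max_left _ _).trans_lt hu1
        have hηu : e - η < u := (le_max_right _ _).trans_lt hu1
        have huX : u ∈ Set.Ico (-1 : ℝ) 1 := ⟨hw.1.trans hwu.le, hu2.trans heX.2⟩
        have hmemE : e ∈ F ∩ Set.Ioc w w' := ⟨he, he1, he2⟩
        have c1 : (F ∩ Set.Ioc w u).ncard < (F ∩ Set.Ioc w w').ncard := by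
          apply Set.ncard_lt_ncard _ hfin
          refine ⟨fun x hx => ⟨hx.1, hx.2.1, by linarith [hx.2.2]⟩, fun hs => ?_⟩
          exact absurd (hs hmemE).2.2 (not_le.mpr hu2)
        have c2 : (F ∩ Set.Ioc e w').ncard < (F ∩ Set.Ioc w w').ncard := by
          apply Set.ncard_lt_ncard _ hfin
          refine ⟨fun x hx => ⟨hx.1, he1.trans hx.2.1, hx.2.2⟩, fun hs => ?_⟩
          exact absurd (hs hmemE).2.1 (lt_irrefl _)
        have i1 := ih w hw u huX hwu.le (by omega)
          (fun x hx hxx => hno x hx ⟨hxx.1, by linarith [hxx.2]⟩)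
        have i2 := ih e heX w' hw' he2 (by omega)
          (fun x hx hxx => hno x hx ⟨he1.trans hxx.1, hxx.2⟩)
        exact i1.trans ((hu u huX hηu hu2).trans i2)
      · push Not at hex
        apply hV w hw w' hw' hle
        rintro e he ⟨h1, h2⟩
        exact absurd h2 (not_le.mpr (hex e he h1))
  intro w hw w' hw' hle hno
  exact key _ w hw w' hw' hle le_rfl hno

lemma jump_sub {V F : Set ℝ} (hF : F.Finite) (hV : Tame V F) : Jump V ⊆ F := by
  rintro p ⟨hpX, hp1, hp⟩
  by_contra hpF
  obtain ⟨η, h1, h2, h3⟩ := gap_left hF hp1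
  obtain ⟨w, hw, h4, h5, h6⟩ := hp η h1
  apply h6
  apply hV w hw p hpX h5.le
  rintro e he ⟨h7, h8⟩
  exact h3 e he (fun h => hpF (h ▸ he)) ⟨h4.trans h7, h8⟩

lemma jump_iff (h : KSys f D) {V : Set ℝ}
    (hinv : ∀ x ∈ Set.Ico (-1 : ℝ) 1, (x ∈ V ↔ f x ∈ V)) {q : ℝ}
    (hq : q ∈ Set.Ico (-1 : ℝ) 1) (hqD : q ∉ D) : q ∈ Jump V ↔ f q ∈ Jump V := by
  have hq1 : -1 < q := lt_of_le_of_ne hq.1 (fun e => hqD (e ▸ h.neg_one))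
  obtain ⟨ζ, hζ, hζ1, hζ2⟩ := gap_left h.fin hq1
  have ht : ∀ s, 0 ≤ s → s < ζ → q - s ∈ Set.Ico (-1 : ℝ) 1 ∧ f (q - s) = f q - s := by
    intro s hs hsζ
    have hX : q - s ∈ Set.Ico (-1 : ℝ) 1 := ⟨by linarith, by linarith [hq.2]⟩
    refine ⟨hX, ?_⟩
    have := h.trans (q - s) hX q hq (by linarith) (by
      rintro d hd ⟨h1, h2⟩
      exact hζ2 d hd (fun e => hqD (e ▸ hd)) ⟨by linarith, h2⟩)
    linarith
  constructor
  · rintro ⟨_, _, hj⟩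
    refine ⟨h.maps q hq, ?_, ?_⟩
    · have h1 := ht (ζ / 2) (by linarith) (by linarith)
      have h2 := h.maps _ h1.1
      rw [h1.2] at h2
      linarith [h2.1]
    · intro η hη
      obtain ⟨w, hw, h1, h2, h3⟩ := hj (min η ζ) (lt_min hη hζ)
      have m1 := min_le_left η ζ
      have m2 := min_le_right η ζ
      have h4 := ht (q - w) (by linarith) (by linarith)
      have h5 : f w = f q - (q - w) := by
        have := h4.2
        rwa [sub_sub_cancel] at this
      refine ⟨f w, h.maps w hw, by linarith, by linarith, ?_⟩
      rwa [← hinv w hw, ← hinv q hq]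
  · rintro ⟨_, _, hj⟩
    refine ⟨hq, hq1, ?_⟩
    intro η hη
    obtain ⟨w, hw, h1, h2, h3⟩ := hj (min η ζ) (lt_min hη hζ)
    have m1 := min_le_left η ζ
    have m2 := min_le_right η ζ
    have h4 := ht (f q - w) (by linarith) (by linarith)
    rw [sub_sub_cancel] at h4
    refine ⟨q - (f q - w), h4.1, by linarith, by linarith, ?_⟩
    rw [hinv _ h4.1, hinv q hq, h4.2]
    exact h3

lemma jump_saddle (h : KSys f D) {V F : Set ℝ} (hF : F.Finite) (hV : Tame V F)
    (hinv : ∀ x ∈ Set.Ico (-1 : ℝ) 1, (x ∈ V ↔ f x ∈ V)) {p : ℝ} (hp : p ∈ Jump V) :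
    ∃ d ∈ D ∩ Set.Ico (-1 : ℝ) 1, ∃ d' ∈ D, ∃ n m : ℕ, f^[m + 1] d = p ∧ f^[n] p = d' := by
  have hJfin : (Jump V).Finite := hF.subset (jump_sub hF hV)
  have fwd : ∃ n, f^[n] p ∈ D := by
    by_contra hcon
    push Not at hcon
    have hall : ∀ n, f^[n] p ∈ Jump V := by
      intro n
      induction n with
      | zero => simpa using hp
      | succ n ih =>
        rw [Function.iterate_succ_apply']
        exact (h.jump_iff hinv ih.1 (hcon n)).1 ih
    have hinj : Function.Injective (fun n => f^[n] p) := by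
      have key : ∀ n m, n < m → f^[n] p ≠ f^[m] p := by
        intro n m hnm e
        obtain ⟨k, rfl⟩ := Nat.exists_eq_add_of_le hnm.le
        rw [Nat.add_comm, Function.iterate_add_apply] at e
        exact h.nonper _ (hall n).1 k (by omega) e.symm
      intro n m e
      rcases lt_trichotomy n m with h1 | h1 | h1
      · exact absurd e (key n m h1)
      · exact h1
      · exact absurd e.symm (key m n h1)
    exact Set.infinite_of_injective_forall_mem hinj hall hJfin
  have bwd : ∃ m, ∃ d ∈ D ∩ Set.Ico (-1 : ℝ) 1, f^[m + 1] d = p := by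
    by_contra hcon
    push Not at hcon
    have hall : ∀ n, ∃ q ∈ Jump V, f^[n] q = p := by
      intro n
      induction n with
      | zero => exact ⟨p, hp, rfl⟩
      | succ n ih =>
        obtain ⟨q, hq, hqp⟩ := ih
        obtain ⟨u, hu, hfu⟩ := h.surj q hq.1
        have hup : f^[n + 1] u = p := by rw [Function.iterate_succ_apply, hfu, hqp]
        refine ⟨u, ?_, hup⟩
        have huD : u ∉ D := fun hd => hcon n u ⟨hd, hu⟩ hup
        rw [h.jump_iff hinv hu huD, hfu]
        exact hq
    choose q hq hqp using hall
    have hinj : Function.Injective q := by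
      have key : ∀ n m, n < m → q n ≠ q m := by
        intro n m hnm e
        obtain ⟨k, rfl⟩ := Nat.exists_eq_add_of_le hnm.le
        have h1 := hqp (n + k)
        rw [← e, Nat.add_comm, Function.iterate_add_apply, hqp n] at h1
        exact h.nonper _ hp.1 k (by omega) h1
      intro n m e
      rcases lt_trichotomy n m with h1 | h1 | h1
      · exact absurd e (key n m h1)
      · exact h1
      · exact absurd e.symm (key m n h1)
    exact Set.infinite_of_injective_forall_mem hinj hq hJfin
  obtain ⟨n, hn⟩ := fwd
  obtain ⟨m, d, hd, hm⟩ := bwd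
  exact ⟨d, hd, _, hn, n, m, hm, rfl⟩

/-- Keane-type minimality criterion. -/
theorem hits (h : KSys f D)
    (hsad : ∀ d ∈ D ∩ Set.Ico (-1 : ℝ) 1, ∀ d' ∈ D, ∀ n : ℕ, 1 ≤ n → f^[n] d = d' →
      n = 1 ∧ (d' = -1 ∨ d' = 0))
    (h01 : 0 ≤ f (-1)) {a b : ℝ} (ha : -1 ≤ a) (hab : a < b) (hb : b ≤ 1) :
    ∀ x ∈ Set.Ico (-1 : ℝ) 1, ∃ k, f^[k] x ∈ Set.Ico a b := by
  obtain ⟨N, hN⟩ := h.bounded_return ha hb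
  set V : Set ℝ := {x | ∃ k < N, f^[k] x ∈ Set.Ico a b} with hVdef
  obtain ⟨F, hF, hV⟩ := h.tame_V a b N
  have hfw : ∀ x, x ∈ V → f x ∈ V := by
    rintro x ⟨k, hk, hx⟩
    rcases Nat.eq_zero_or_pos k with rfl | hkp
    · obtain ⟨n, h1, h2, h3⟩ := hN x (by simpa using hx)
      refine ⟨n - 1, by omega, ?_⟩
      rw [← Function.iterate_succ_apply, Nat.succ_eq_add_one, Nat.sub_add_cancel h1]
      exact h3
    · refine ⟨k - 1, by omega, ?_⟩
      rw [← Function.iterate_succ_apply, Nat.succ_eq_add_one, Nat.sub_add_cancel hkp]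
      exact hx
  have hfwn : ∀ n x, x ∈ V → f^[n] x ∈ V := by
    intro n
    induction n with
    | zero => intro x hx; simpa using hx
    | succ n ih => intro x hx; rw [Function.iterate_succ_apply]; exact ih _ (hfw x hx)
  have hinv : ∀ x ∈ Set.Ico (-1 : ℝ) 1, (x ∈ V ↔ f x ∈ V) := by
    intro x hx
    refine ⟨hfw x, fun hfx => ?_⟩
    by_contra hxV
    obtain ⟨F', hF', hV'⟩ := h.tame_pre hF hV
    obtain ⟨x', h1, h2, h3⟩ := gap hF hx.2
    obtain ⟨n, hn1, hn2⟩ := h.recur hx.1 h2.le (z := x) ⟨le_rfl, h1⟩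
    have hX : f^[n] x ∈ Set.Ico (-1 : ℝ) 1 := h.iter_maps n x hx
    have hiff := hV x hx _ hX hn2.1
      (fun e he hee => h3 e he ⟨hee.1, hee.2.trans hn2.2.le⟩)
    apply hxV
    rw [hVdef, hiff]
    have := hfwn (n - 1) _ hfx
    rw [← Function.iterate_succ_apply, Nat.succ_eq_add_one, Nat.sub_add_cancel hn1] at this
    exact this
  have hJ : ∀ p ∈ Jump V, p = 0 := by
    intro p hp
    obtain ⟨d, hd, d', hd', n, m, h1, h2⟩ := h.jump_saddle hF hV hinv hp
    have h3 : f^[n + (m + 1)] d = d' := by rw [Function.iterate_add_apply, h1, h2]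
    obtain ⟨h4, h5⟩ := hsad d hd d' hd' _ (by omega) h3
    have : n = 0 := by omega
    subst this
    have hpd : p = d' := by simpa using h2
    rcases h5 with h5 | h5
    · exact absurd (hpd.trans h5) (ne_of_gt hp.2.1)
    · exact hpd.trans h5
  have hT := tame_jump hF hV
  have hm1 : (-1 : ℝ) ∈ Set.Ico (-1 : ℝ) 1 := by constructor <;> norm_num
  have h0 : (0 : ℝ) ∈ Set.Ico (-1 : ℝ) 1 := by constructor <;> norm_num
  have hneg : ∀ w ∈ Set.Ico (-1 : ℝ) 1, w < 0 → (-1 ∈ V ↔ w ∈ V) := by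
    intro w hw hw0
    apply hT _ hm1 w hw hw.1
    rintro e he ⟨_, h2⟩
    rw [hJ e he] at h2
    linarith
  have hpos : ∀ w ∈ Set.Ico (-1 : ℝ) 1, 0 ≤ w → (0 ∈ V ↔ w ∈ V) := by
    intro w hw hw0
    apply hT _ h0 w hw hw0
    rintro e he ⟨h1, _⟩
    rw [hJ e he] at h1
    linarith
  have hlink : (-1 : ℝ) ∈ V ↔ (0 : ℝ) ∈ V := by
    rw [hinv _ hm1, hpos _ (h.maps _ hm1) h01]
  have hall : ∀ w ∈ Set.Ico (-1 : ℝ) 1, (w ∈ V ↔ (0 : ℝ) ∈ V) := by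
    intro w hw
    rcases lt_or_ge w 0 with h1 | h1
    · rw [← hneg w hw h1, hlink]
    · rw [← hpos w hw h1]
  have haX : a ∈ Set.Ico (-1 : ℝ) 1 := ⟨ha, hab.trans_le hb⟩
  have haV : a ∈ V := by
    obtain ⟨n, h1, h2, _⟩ := hN a ⟨le_rfl, hab⟩
    exact ⟨0, by omega, by simpa using hab⟩
  intro x hx
  have hxV : x ∈ V := (hall x hx).2 ((hall a haX).1 haV)
  obtain ⟨k, _, hk⟩ := hxV
  exact ⟨k, hk⟩

end KSys

/-- The concrete map, parametrised by `δ = 1 / (220 π)`. -/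
noncomputable def gD (δ : ℝ) : ℝ → ℝ := fIET (5 / 11 + 10 * δ) (5 / 11 - δ)

lemma gD_cases (δ x : ℝ) (h1 : 10 / 6912 < δ) (h2 : δ < 10 / 6911)
    (hx : x ∈ Set.Ico (-1 : ℝ) 1) :
    (-1 ≤ x ∧ x < 11 * δ - 1 ∧ gD δ x = x + 43 / 22 + 10 * δ) ∨
    (11 * δ - 1 ≤ x ∧ x < 11 * δ - 1 / 2 ∧ gD δ x = x + 5 / 11 - δ) ∨
    (11 * δ - 1 / 2 ≤ x ∧ x < - 5 / 11 - 10 * δ ∧ gD δ x = x + 5 / 11 + 10 * δ) ∨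
    (- 5 / 11 - 10 * δ ≤ x ∧ x < 0 ∧ gD δ x = x - 6 / 11 + 10 * δ) ∨
    (0 ≤ x ∧ x < 11 * δ ∧ gD δ x = x - 1 / 22 + 10 * δ) ∨
    (11 * δ ≤ x ∧ x < 11 * δ + 1 / 2 ∧ gD δ x = x + 5 / 11 - δ) ∨
    (11 * δ + 1 / 2 ≤ x ∧ x < 6 / 11 - 10 * δ ∧ gD δ x = x + 5 / 11 + 10 * δ) ∨
    (6 / 11 - 10 * δ ≤ x ∧ x < 1 ∧ gD δ x = x - 6 / 11 + 10 * δ) := by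
  obtain ⟨hx1, hx2⟩ := hx
  unfold gD fIET
  split_ifs with c1 c2 c3 c4 c5 c6 c7
  · left; refine ⟨?_, ?_, ?_⟩ <;> linarith
  · right; left; refine ⟨?_, ?_, ?_⟩ <;> linarith
  · right; right; left; refine ⟨?_, ?_, ?_⟩ <;> linarith
  · right; right; right; left; refine ⟨?_, ?_, ?_⟩ <;> linarith
  · right; right; right; right; left; refine ⟨?_, ?_, ?_⟩ <;> linarith
  · right; right; right; right; right; left; refine ⟨?_, ?_, ?_⟩ <;> linarith
  · right; right; right; right; right; right; left; refine ⟨?_, ?_, ?_⟩ <;> linarith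
  · right; right; right; right; right; right; right; refine ⟨?_, ?_, ?_⟩ <;> linarith

lemma gD_maps (δ : ℝ) (h1 : 10 / 6912 < δ) (h2 : δ < 10 / 6911) :
    ∀ x ∈ Set.Ico (-1 : ℝ) 1, gD δ x ∈ Set.Ico (-1 : ℝ) 1 := by
  intro x hx
  rcases gD_cases δ x h1 h2 hx with h | h | h | h | h | h | h | h <;>
  · obtain ⟨a, b, c⟩ := h
    rw [c]
    constructor <;> linarith

set_option maxHeartbeats 4000000 in
lemma gD_inj (δ : ℝ) (h1 : 10 / 6912 < δ) (h2 : δ < 10 / 6911) :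
    Set.InjOn (gD δ) (Set.Ico (-1 : ℝ) 1) := by
  intro x hx y hy e
  rcases gD_cases δ x h1 h2 hx with h | h | h | h | h | h | h | h <;>
  rcases gD_cases δ y h1 h2 hy with k | k | k | k | k | k | k | k <;>
  · obtain ⟨a, b, c⟩ := h
    obtain ⟨a', b', c'⟩ := k
    rw [c, c'] at e
    linarith

set_option maxHeartbeats 4000000 in
lemma gD_surj (δ : ℝ) (h1 : 10 / 6912 < δ) (h2 : δ < 10 / 6911) :
    ∀ y ∈ Set.Ico (-1 : ℝ) 1, ∃ x ∈ Set.Ico (-1 : ℝ) 1, gD δ x = y := by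
  rintro y ⟨hy1, hy2⟩
  rcases lt_or_ge y (10 * δ - 6 / 11) with a1 | a1
  · have hX : y + 6 / 11 - 10 * δ ∈ Set.Ico (-1 : ℝ) 1 := by constructor <;> linarith
    refine ⟨_, hX, ?_⟩
    rcases gD_cases δ _ h1 h2 hX with h | h | h | h | h | h | h | h <;> linarith [h.1, h.2.1, h.2.2]
  rcases lt_or_ge y (10 * δ - 1 / 22) with a2 | a2
  · have hX : y - 5 / 11 + δ ∈ Set.Ico (-1 : ℝ) 1 := by constructor <;> linarith
    refine ⟨_, hX, ?_⟩
    rcases gD_cases δ _ h1 h2 hX with h | h | h | h | h | h | h | h <;> linarith [h.1, h.2.1, h.2.2]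
  rcases lt_or_ge y (21 * δ - 1 / 22) with a3 | a3
  · have hX : y + 1 / 22 - 10 * δ ∈ Set.Ico (-1 : ℝ) 1 := by constructor <;> linarith
    refine ⟨_, hX, ?_⟩
    rcases gD_cases δ _ h1 h2 hX with h | h | h | h | h | h | h | h <;> linarith [h.1, h.2.1, h.2.2]
  rcases lt_or_ge y 0 with a4 | a4
  · have hX : y - 5 / 11 - 10 * δ ∈ Set.Ico (-1 : ℝ) 1 := by constructor <;> linarith
    refine ⟨_, hX, ?_⟩
    rcases gD_cases δ _ h1 h2 hX with h | h | h | h | h | h | h | h <;> linarith [h.1, h.2.1, h.2.2]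
  rcases lt_or_ge y (5 / 11 + 10 * δ) with a5 | a5
  · have hX : y + 6 / 11 - 10 * δ ∈ Set.Ico (-1 : ℝ) 1 := by constructor <;> linarith
    refine ⟨_, hX, ?_⟩
    rcases gD_cases δ _ h1 h2 hX with h | h | h | h | h | h | h | h <;> linarith [h.1, h.2.1, h.2.2]
  rcases lt_or_ge y (21 / 22 + 10 * δ) with a6 | a6
  · have hX : y - 5 / 11 + δ ∈ Set.Ico (-1 : ℝ) 1 := by constructor <;> linarith
    refine ⟨_, hX, ?_⟩
    rcases gD_cases δ _ h1 h2 hX with h | h | h | h | h | h | h | h <;> linarith [h.1, h.2.1, h.2.2]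
  rcases lt_or_ge y (21 / 22 + 21 * δ) with a7 | a7
  · have hX : y - 43 / 22 - 10 * δ ∈ Set.Ico (-1 : ℝ) 1 := by constructor <;> linarith
    refine ⟨_, hX, ?_⟩
    rcases gD_cases δ _ h1 h2 hX with h | h | h | h | h | h | h | h <;> linarith [h.1, h.2.1, h.2.2]
  · have hX : y - 5 / 11 - 10 * δ ∈ Set.Ico (-1 : ℝ) 1 := by constructor <;> linarith
    refine ⟨_, hX, ?_⟩
    rcases gD_cases δ _ h1 h2 hX with h | h | h | h | h | h | h | h <;> linarith [h.1, h.2.1, h.2.2]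

/-- Breakpoints as integer pairs `(a, b)`, standing for `a / 22 + b δ`. -/
def brk : List (ℤ × ℤ) :=
  [(-22, 0), (-22, 11), (-11, 11), (-10, -10), (0, 0), (0, 11), (11, 11), (12, -10)]

noncomputable def pval (δ : ℝ) (p : ℤ × ℤ) : ℝ := (p.1 : ℝ) / 22 + p.2 * δ

def brkSet (δ : ℝ) : Set ℝ := {x | ∃ p ∈ brk, pval δ p = x}

lemma brkSet_finite (δ : ℝ) : (brkSet δ).Finite := by
  have : brkSet δ = Set.image (pval δ) {p | p ∈ brk} := by
    ext x; simp [brkSet]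
  rw [this]
  exact (List.finite_toSet brk).image _

set_option maxHeartbeats 4000000 in
lemma gD_trans (δ : ℝ) (h1 : 10 / 6912 < δ) (h2 : δ < 10 / 6911) :
    ∀ w ∈ Set.Ico (-1 : ℝ) 1, ∀ w' ∈ Set.Ico (-1 : ℝ) 1, w ≤ w' →
    (∀ d ∈ brkSet δ, ¬ (w < d ∧ d ≤ w')) → gD δ w' = gD δ w + (w' - w) := by
  intro w hw w' hw' hle hno
  have hb : ∀ p ∈ brk, w < pval δ p → w' < pval δ p := by
    intro p hp h3
    by_contra hc
    exact hno _ ⟨p, hp, rfl⟩ ⟨h3, not_lt.mp hc⟩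
  simp only [brk, pval, List.mem_cons, List.not_mem_nil, or_false, forall_eq_or_imp,
    forall_eq] at hb
  norm_num at hb
  obtain ⟨b0, b1, b2, b3, b4, b5, b6, b7⟩ := hb
  rcases gD_cases δ w h1 h2 hw with h | h | h | h | h | h | h | h
  · have := b1 (by linarith [h.2.1])
    rcases gD_cases δ w' h1 h2 hw' with k | k | k | k | k | k | k | k <;>
      linarith [h.1, h.2.1, h.2.2, k.1, k.2.1, k.2.2]
  · have := b2 (by linarith [h.2.1])
    rcases gD_cases δ w' h1 h2 hw' with k | k | k | k | k | k | k | k <;>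
      linarith [h.1, h.2.1, h.2.2, k.1, k.2.1, k.2.2]
  · have := b3 (by linarith [h.2.1])
    rcases gD_cases δ w' h1 h2 hw' with k | k | k | k | k | k | k | k <;>
      linarith [h.1, h.2.1, h.2.2, k.1, k.2.1, k.2.2]
  · have := b4 (by linarith [h.2.1])
    rcases gD_cases δ w' h1 h2 hw' with k | k | k | k | k | k | k | k <;>
      linarith [h.1, h.2.1, h.2.2, k.1, k.2.1, k.2.2]
  · have := b5 (by linarith [h.2.1])
    rcases gD_cases δ w' h1 h2 hw' with k | k | k | k | k | k | k | k <;>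
      linarith [h.1, h.2.1, h.2.2, k.1, k.2.1, k.2.2]
  · have := b6 (by linarith [h.2.1])
    rcases gD_cases δ w' h1 h2 hw' with k | k | k | k | k | k | k | k <;>
      linarith [h.1, h.2.1, h.2.2, k.1, k.2.1, k.2.2]
  · have := b7 (by linarith [h.2.1])
    rcases gD_cases δ w' h1 h2 hw' with k | k | k | k | k | k | k | k <;>
      linarith [h.1, h.2.1, h.2.2, k.1, k.2.1, k.2.2]
  · rcases gD_cases δ w' h1 h2 hw' with k | k | k | k | k | k | k | k <;>
      linarith [h.1, h.2.1, h.2.2, k.1, k.2.1, k.2.2]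

/-- The region where the map translates by `r₂`. -/
def Slow (δ x : ℝ) : Prop :=
  (11 * δ - 1 ≤ x ∧ x < 11 * δ - 1 / 2) ∨ (11 * δ ≤ x ∧ x < 11 * δ + 1 / 2)

lemma gD_step (δ x : ℝ) (h1 : 10 / 6912 < δ) (h2 : δ < 10 / 6911)
    (hx : x ∈ Set.Ico (-1 : ℝ) 1) :
    (∃ A : ℤ, gD δ x = x + A / 22 + ((10 : ℤ) : ℝ) * δ) ∨
    (Slow δ x ∧ gD δ x = x + 5 / 11 - δ) := by
  rcases gD_cases δ x h1 h2 hx with h | h | h | h | h | h | h | h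
  · left; exact ⟨43, by rw [h.2.2]; norm_num⟩
  · right; exact ⟨Or.inl ⟨h.1, h.2.1⟩, h.2.2⟩
  · left; exact ⟨10, by rw [h.2.2]; norm_num⟩
  · left; exact ⟨-12, by rw [h.2.2]; norm_num; ring⟩
  · left; exact ⟨-1, by rw [h.2.2]; norm_num; ring⟩
  · right; exact ⟨Or.inr ⟨h.1, h.2.1⟩, h.2.2⟩
  · left; exact ⟨10, by rw [h.2.2]; norm_num⟩
  · left; exact ⟨-12, by rw [h.2.2]; norm_num; ring⟩

lemma gD_step1 (δ x : ℝ) (h1 : 10 / 6912 < δ) (h2 : δ < 10 / 6911)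
    (hx : x ∈ Set.Ico (-1 : ℝ) 1) :
    ∃ A B : ℤ, gD δ x = x + A / 22 + B * δ ∧ -1 ≤ B := by
  rcases gD_step δ x h1 h2 hx with ⟨A, h⟩ | ⟨_, h⟩
  · exact ⟨A, 10, h, by norm_num⟩
  · exact ⟨10, -1, by rw [h]; norm_num; ring, le_rfl⟩

lemma gD_step3 (δ x : ℝ) (h1 : 10 / 6912 < δ) (h2 : δ < 10 / 6911)
    (hx : x ∈ Set.Ico (-1 : ℝ) 1) :
    ∃ A B : ℤ, (gD δ)^[3] x = x + A / 22 + B * δ ∧ 8 ≤ B := by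
  have hx1 := gD_maps δ h1 h2 x hx
  have hx2 := gD_maps δ h1 h2 _ hx1
  have e3 : (gD δ)^[3] x = gD δ (gD δ (gD δ x)) := rfl
  rw [e3]
  obtain ⟨A1, B1, f1, g1⟩ := gD_step1 δ x h1 h2 hx
  obtain ⟨A2, B2, f2, g2⟩ := gD_step1 δ _ h1 h2 hx1
  obtain ⟨A3, B3, f3, g3⟩ := gD_step1 δ _ h1 h2 hx2
  rcases gD_step δ x h1 h2 hx with ⟨A, h⟩ | ⟨s1, e1⟩
  · refine ⟨A + A2 + A3, 10 + B2 + B3, ?_, by omega⟩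
    rw [f3, f2, h]; push_cast; ring
  rcases gD_step δ _ h1 h2 hx1 with ⟨A, h⟩ | ⟨s2, e2⟩
  · refine ⟨A1 + A + A3, B1 + 10 + B3, ?_, by omega⟩
    rw [f3, h, f1]; push_cast; ring
  rcases gD_step δ _ h1 h2 hx2 with ⟨A, h⟩ | ⟨s3, e3⟩
  · refine ⟨A1 + A2 + A, B1 + B2 + 10, ?_, by omega⟩
    rw [h, f2, f1]; push_cast; ring
  exfalso
  rw [e2, e1] at s3
  rw [e1] at s2
  rcases s1 with s1 | s1 <;> rcases s2 with s2 | s2 <;> rcases s3 with s3 | s3 <;>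
    linarith [s1.1, s1.2, s2.1, s2.2, s3.1, s3.2]

lemma gD_drift (δ : ℝ) (h1 : 10 / 6912 < δ) (h2 : δ < 10 / 6911) (q : ℕ) :
    ∀ x ∈ Set.Ico (-1 : ℝ) 1,
    ∃ A B : ℤ, (gD δ)^[3 * q] x = x + A / 22 + B * δ ∧ 8 * (q : ℤ) ≤ B := by
  induction q with
  | zero => intro x _; exact ⟨0, 0, by simp, by simp⟩
  | succ q ih =>
    intro x hx
    obtain ⟨A, B, e, hB⟩ := gD_step3 δ x h1 h2 hx
    have hx3 : (gD δ)^[3] x ∈ Set.Ico (-1 : ℝ) 1 :=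
      gD_maps δ h1 h2 _ (gD_maps δ h1 h2 _ (gD_maps δ h1 h2 x hx))
    obtain ⟨A', B', e', hB'⟩ := ih _ hx3
    refine ⟨A + A', B + B', ?_, by push_cast; omega⟩
    rw [show 3 * (q + 1) = 3 * q + 3 by ring, Function.iterate_add_apply, e', e]
    push_cast; ring

lemma gD_drift1 (δ : ℝ) (h1 : 10 / 6912 < δ) (h2 : δ < 10 / 6911) (r : ℕ) :
    ∀ x ∈ Set.Ico (-1 : ℝ) 1,
    ∃ A B : ℤ, (gD δ)^[r] x = x + A / 22 + B * δ ∧ -(r : ℤ) ≤ B := by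
  induction r with
  | zero => intro x _; exact ⟨0, 0, by simp, by simp⟩
  | succ q ih =>
    intro x hx
    obtain ⟨A, B, e, hB⟩ := gD_step1 δ x h1 h2 hx
    obtain ⟨A', B', e', hB'⟩ := ih _ (gD_maps δ h1 h2 _ hx)
    refine ⟨A + A', B + B', ?_, by push_cast; omega⟩
    rw [Function.iterate_succ_apply, e', e]
    push_cast; ring

lemma irr_pair {δ : ℝ} (hδ : Irrational δ) {A B : ℤ} (h : (A : ℝ) / 22 + B * δ = 0) :
    A = 0 ∧ B = 0 := by
  have hB : B = 0 := by
    by_contra hB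
    have hB' : (B : ℝ) ≠ 0 := by exact_mod_cast hB
    apply hδ
    refine ⟨-(A : ℚ) / 22 / B, ?_⟩
    push_cast
    field_simp
    linarith
  subst hB
  refine ⟨?_, rfl⟩
  have : (A : ℝ) = 0 := by
    push_cast at h
    linarith
  exact_mod_cast this

lemma gD_nonper (δ : ℝ) (h1 : 10 / 6912 < δ) (h2 : δ < 10 / 6911) (hδ : Irrational δ) :
    ∀ x ∈ Set.Ico (-1 : ℝ) 1, ∀ n : ℕ, 1 ≤ n → (gD δ)^[n] x ≠ x := by
  intro x hx n hn e
  obtain ⟨A, B, e', hB⟩ := gD_drift δ h1 h2 n x hx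
  have h3 : (gD δ)^[3 * n] x = x := by
    rw [show 3 * n = n + (n + n) by ring, Function.iterate_add_apply, Function.iterate_add_apply,
      e, e, e]
  have := irr_pair hδ (A := A) (B := B) (by linarith)
  omega

/-- Certified sign tests, using `10/6912 < δ < 10/6911`. -/
def pneg (p q : ℤ × ℤ) : Bool :=
  decide ((p.1 - q.1) * 6912 + 220 * (p.2 - q.2) < 0) &&
  decide ((p.1 - q.1) * 6911 + 220 * (p.2 - q.2) < 0)

def pnonneg (p q : ℤ × ℤ) : Bool :=
  decide (0 ≤ (p.1 - q.1) * 6912 + 220 * (p.2 - q.2)) &&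
  decide (0 ≤ (p.1 - q.1) * 6911 + 220 * (p.2 - q.2))

def pstep (p : ℤ × ℤ) : ℤ × ℤ :=
  if pneg p (-22, 11) then (p.1 + 43, p.2 + 10)
  else if pneg p (-11, 11) then (p.1 + 10, p.2 - 1)
  else if pneg p (-10, -10) then (p.1 + 10, p.2 + 10)
  else if pneg p (0, 0) then (p.1 - 12, p.2 + 10)
  else if pneg p (0, 11) then (p.1 - 1, p.2 + 10)
  else if pneg p (11, 11) then (p.1 + 10, p.2 - 1)
  else if pneg p (12, -10) then (p.1 + 10, p.2 + 10)
  else (p.1 - 12, p.2 + 10)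

def pok (p : ℤ × ℤ) : Bool := brk.all fun q => pneg p q || pnonneg p q

lemma pneg_lt {δ : ℝ} (h1 : 10 / 6912 < δ) (h2 : δ < 10 / 6911) {p q : ℤ × ℤ}
    (h : pneg p q = true) : pval δ p < pval δ q := by
  simp only [pneg, Bool.and_eq_true, decide_eq_true_eq] at h
  obtain ⟨a, b⟩ := h
  have a' : ((p.1 : ℝ) - q.1) * 6912 + 220 * (p.2 - q.2) < 0 := by exact_mod_cast a
  have b' : ((p.1 : ℝ) - q.1) * 6911 + 220 * (p.2 - q.2) < 0 := by exact_mod_cast b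
  unfold pval
  rcases le_total (0 : ℝ) ((p.2 : ℝ) - q.2) with h | h
  · nlinarith
  · nlinarith

lemma pnonneg_le {δ : ℝ} (h1 : 10 / 6912 < δ) (h2 : δ < 10 / 6911) {p q : ℤ × ℤ}
    (h : pnonneg p q = true) : pval δ q ≤ pval δ p := by
  simp only [pnonneg, Bool.and_eq_true, decide_eq_true_eq] at h
  obtain ⟨a, b⟩ := h
  have a' : 0 ≤ ((p.1 : ℝ) - q.1) * 6912 + 220 * (p.2 - q.2) := by exact_mod_cast a
  have b' : 0 ≤ ((p.1 : ℝ) - q.1) * 6911 + 220 * (p.2 - q.2) := by exact_mod_cast b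
  unfold pval
  rcases le_total (0 : ℝ) ((p.2 : ℝ) - q.2) with h | h
  · nlinarith
  · nlinarith

lemma pstep_spec {δ : ℝ} (h1 : 10 / 6912 < δ) (h2 : δ < 10 / 6911) {p : ℤ × ℤ}
    (h : pok p = true) : gD δ (pval δ p) = pval δ (pstep p) := by
  have hb : ∀ q ∈ brk, (pneg p q = true ↔ pval δ p < pval δ q) := by
    intro q hq
    refine ⟨pneg_lt h1 h2, fun hlt => ?_⟩
    have h3 := List.all_eq_true.mp h q hq
    rw [Bool.or_eq_true] at h3
    rcases h3 with h3 | h3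
    · exact h3
    · exact absurd (pnonneg_le h1 h2 h3) (not_le.mpr hlt)
  have e1 : pval δ (-22, 11) = 5 / 11 + 10 * δ - (5 / 11 - δ) - 1 := by
    simp only [pval]; push_cast; ring
  have e2 : pval δ (-11, 11) = 5 / 11 + 10 * δ - (5 / 11 - δ) - 1 / 2 := by
    simp only [pval]; push_cast; ring
  have e3 : pval δ (-10, -10) = -(5 / 11 + 10 * δ) := by
    simp only [pval]; push_cast; ring
  have e4 : pval δ (0, 0) = 0 := by simp [pval]
  have e5 : pval δ (0, 11) = 5 / 11 + 10 * δ - (5 / 11 - δ) := by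
    simp only [pval]; push_cast; ring
  have e6 : pval δ (11, 11) = 5 / 11 + 10 * δ - (5 / 11 - δ) + 1 / 2 := by
    simp only [pval]; push_cast; ring
  have e7 : pval δ (12, -10) = 1 - (5 / 11 + 10 * δ) := by
    simp only [pval]; push_cast; ring
  unfold pstep gD fIET
  rw [← e1, ← e2, ← e3, ← e6, ← e5, ← e7]
  simp only [hb (-22, 11) (by decide), hb (-11, 11) (by decide), hb (-10, -10) (by decide),
    hb (0, 0) (by decide), hb (0, 11) (by decide), hb (11, 11) (by decide),
    hb (12, -10) (by decide), e4]
  split_ifs <;> simp only [pval] <;> push_cast <;> ring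

lemma pok_all : ∀ d ∈ brk, ∀ k ∈ List.range 9, pok (pstep^[k] d) = true := by
  decide +kernel

lemma psad_all : ∀ d ∈ brk, ∀ k ∈ List.range 9, 1 ≤ k → pstep^[k] d ∈ brk →
    k = 1 ∧ (pstep^[k] d = (-22, 0) ∨ pstep^[k] d = (0, 0)) := by
  decide +kernel

lemma brk_bound : ∀ d ∈ brk, -10 ≤ d.2 ∧ d.2 ≤ 11 := by decide

lemma gD_saddle (δ : ℝ) (h1 : 10 / 6912 < δ) (h2 : δ < 10 / 6911) (hδ : Irrational δ) :
    ∀ d ∈ brkSet δ ∩ Set.Ico (-1 : ℝ) 1, ∀ d' ∈ brkSet δ, ∀ n : ℕ, 1 ≤ n →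
      (gD δ)^[n] d = d' → n = 1 ∧ (d' = -1 ∨ d' = 0) := by
  rintro _ ⟨⟨p, hp, rfl⟩, hX⟩ _ ⟨p', hp', rfl⟩ n hn e
  have inj : ∀ u v : ℤ × ℤ, pval δ u = pval δ v → u = v := by
    intro u v huv
    have := irr_pair hδ (A := u.1 - v.1) (B := u.2 - v.2) (by
      simp only [pval] at huv; push_cast; linarith)
    ext <;> omega
  rcases Nat.lt_or_ge n 9 with hlt | hge
  · have hit : ∀ k ≤ 9, (gD δ)^[k] (pval δ p) = pval δ (pstep^[k] p) := by
      intro k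
      induction k with
      | zero => intro _; rfl
      | succ k ih =>
        intro hk
        rw [Function.iterate_succ_apply', Function.iterate_succ_apply', ih (by omega)]
        exact pstep_spec h1 h2 (pok_all p hp k (List.mem_range.2 (by omega)))
    rw [hit n hlt.le] at e
    have e' := inj _ _ e
    obtain ⟨h3, h4⟩ := psad_all p hp n (List.mem_range.2 hlt) hn (e' ▸ hp')
    rw [e'] at h4
    refine ⟨h3, ?_⟩
    rcases h4 with rfl | rfl
    · left; norm_num [pval]
    · right; norm_num [pval]
  · exfalso
    have hn' : n = 3 * (n / 3) + n % 3 := (Nat.div_add_mod n 3).symm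
    obtain ⟨A, B, e1, hB⟩ := gD_drift1 δ h1 h2 (n % 3) _ hX
    have hX' : (gD δ)^[n % 3] (pval δ p) ∈ Set.Ico (-1 : ℝ) 1 := by
      have : ∀ k, (gD δ)^[k] (pval δ p) ∈ Set.Ico (-1 : ℝ) 1 := by
        intro k
        induction k with
        | zero => exact hX
        | succ k ih => rw [Function.iterate_succ_apply']; exact gD_maps δ h1 h2 _ ih
      exact this _
    obtain ⟨A', B', e2, hB'⟩ := gD_drift δ h1 h2 (n / 3) _ hX'
    rw [hn', Function.iterate_add_apply, e2, e1] at e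
    have := irr_pair hδ (A := p.1 + A + A' - p'.1) (B := p.2 + B + B' - p'.2) (by
      simp only [pval] at e; push_cast; linarith)
    have b1 := brk_bound p hp
    have b2 := brk_bound p' hp'
    omega

lemma gD_ksys (δ : ℝ) (h1 : 10 / 6912 < δ) (h2 : δ < 10 / 6911) (hδ : Irrational δ) :
    KSys (gD δ) (brkSet δ) where
  maps := gD_maps δ h1 h2
  inj := gD_inj δ h1 h2
  surj := gD_surj δ h1 h2
  fin := brkSet_finite δ
  neg_one := ⟨(-22, 0), by decide, by norm_num [pval]⟩
  trans := gD_trans δ h1 h2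
  nonper := gD_nonper δ h1 h2 hδ

theorem fIET_minimal_example :
    let r1 : ℝ := 5 / 11 + 1 / (22 * Real.pi)
    let r2 : ℝ := 5 / 11 - 1 / (220 * Real.pi)
    (∀ x ∈ Set.Ico (-1 : ℝ) 1, ∀ y ∈ Set.Ico (-1 : ℝ) 1, ∀ ε : ℝ, 0 < ε →
      ∃ n : ℕ, |(fIET r1 r2)^[n] x - y| < ε) ∧
    (∀ x ∈ Set.Ico (-1 : ℝ) 1, ∀ m : ℕ, 1 ≤ m → (fIET r1 r2)^[m] x ≠ x) := by
  intro r1 r2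
  have hpi := Real.pi_pos
  obtain ⟨δ, hδdef⟩ : ∃ δ : ℝ, δ = 1 / (220 * Real.pi) := ⟨_, rfl⟩
  have hf : fIET r1 r2 = gD δ := by
    have e1 : r1 = 5 / 11 + 10 * δ := by
      simp only [r1, hδdef]; field_simp; ring
    have e2 : r2 = 5 / 11 - δ := by simp only [r2, hδdef]
    rw [e1, e2]; rfl
  have hirr : Irrational δ := by
    rw [hδdef, one_div]
    apply Irrational.inv
    have := irrational_pi.natCast_mul (m := 220) (by norm_num)
    exact_mod_cast this
  have h1 : 10 / 6912 < δ := by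
    rw [hδdef, div_lt_div_iff₀ (by norm_num) (by positivity)]
    linarith [Real.pi_lt_d4]
  have h2 : δ < 10 / 6911 := by
    rw [hδdef, div_lt_div_iff₀ (by positivity) (by norm_num)]
    linarith [Real.pi_gt_d4]
  have hK := gD_ksys δ h1 h2 hirr
  rw [hf]
  refine ⟨?_, hK.nonper⟩
  intro x hx y hy ε hε
  have h01 : 0 ≤ gD δ (-1) := by
    rcases gD_cases δ (-1) h1 h2 ⟨le_rfl, by norm_num⟩ with h | h | h | h | h | h | h | h <;>
      linarith [h.1, h.2.1, h.2.2]
  obtain ⟨k, hk⟩ := hK.hits (gD_saddle δ h1 h2 hirr) h01 hy.1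
    (b := min 1 (y + ε)) (lt_min hy.2 (by linarith)) (min_le_left _ _) x hx
  refine ⟨k, ?_⟩
  have := min_le_right 1 (y + ε)
  rw [abs_lt]
  constructor <;> linarith [hk.1, hk.2]
end
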